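/- arXiv:0901.3995 — 6 statements merged into one kernel-verified Lean document; each statement's English description precedes it below -/
import Mathlib

section
/- Let N ≥ 1 be an integer, let n > 0, and set p = 1 + n + 4/N and β = 1/(4 + nN). Suppose g : ℝ^N → ℝ is a nonnegative C⁴ function with compact support such that the vector field y ↦ g(y)^n ∇(Δg)(y) is C¹, and g satisfies −div(g^n ∇(Δg))(y) + β y·∇g(y) + β N g(y) − g(y)^p = 0 for every y ∈ ℝ^N. Then g is identically zero. (The stationary rescaled thin-film equation with critical absorption has no nontrivial compactly supported nonnegative solution.) -/
open MeasureTheory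
open scoped RealInnerProductSpace

/-- The Laplacian of a scalar function on `ℝ^N`. -/
noncomputable def lap {N : ℕ} (f : EuclideanSpace ℝ (Fin N) → ℝ)
    (x : EuclideanSpace ℝ (Fin N)) : ℝ :=
  ∑ i : Fin N, fderiv ℝ (fun y => fderiv ℝ f y (EuclideanSpace.single i 1)) x
    (EuclideanSpace.single i 1)

/-- The divergence of a vector field on `ℝ^N`. -/
noncomputable def diverg {N : ℕ}
    (V : EuclideanSpace ℝ (Fin N) → EuclideanSpace ℝ (Fin N))
    (x : EuclideanSpace ℝ (Fin N)) : ℝ :=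
  ∑ i : Fin N, fderiv ℝ (fun y => V y i) x (EuclideanSpace.single i 1)

lemma aux_int_fderiv {N : ℕ} (F : EuclideanSpace ℝ (Fin N) → ℝ) (hF : ContDiff ℝ 1 F)
    (hc : HasCompactSupport F) (v : EuclideanSpace ℝ (Fin N)) :
    Integrable (fun x => fderiv ℝ F x v) ∧ ∫ x, fderiv ℝ F x v = 0 := by
  have hcont : Continuous (fun x => fderiv ℝ F x v) :=
    (hF.continuous_fderiv (by norm_num)).clm_apply continuous_const
  have hi : Integrable (fun x => fderiv ℝ F x v) :=
    hcont.integrable_of_hasCompactSupport (hc.fderiv_apply (𝕜 := ℝ) v)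
  refine ⟨hi, ?_⟩
  have h := integral_mul_fderiv_eq_neg_fderiv_mul_of_integrable (μ := volume)
    (f := fun _ : EuclideanSpace ℝ (Fin N) => (1 : ℝ)) (g := F) (v := v)
    (by simp) (by simpa using hi)
    (by simpa using hF.continuous.integrable_of_hasCompactSupport hc)
    (fun x _ => by fun_prop) (fun x _ => (hF.differentiable (by norm_num)) x)
  simpa using h

/-- The stationary rescaled thin-film equation with critical absorption has no
nontrivial compactly supported nonnegative solution. -/
theorem stationary_TFE_critical_absorption_trivial
    (N : ℕ) (hN : 1 ≤ N) (n : ℝ) (hn : 0 < n) (p β : ℝ)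
    (hp : p = 1 + n + 4 / N) (hβ : β = 1 / (4 + n * N))
    (g : EuclideanSpace ℝ (Fin N) → ℝ)
    (hg0 : ∀ y, 0 ≤ g y) (hg4 : ContDiff ℝ 4 g) (hgc : HasCompactSupport g)
    (hV : ContDiff ℝ 1 (fun y => (g y ^ n) • gradient (lap g) y))
    (heq : ∀ y, -diverg (fun z => (g z ^ n) • gradient (lap g) z) y
        + β * ⟪y, gradient g y⟫ + β * N * g y - g y ^ p = 0) :
    g = 0 := by
  have hp0 : 0 < p := by rw [hp]; positivity
  set V : EuclideanSpace ℝ (Fin N) → EuclideanSpace ℝ (Fin N) :=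
    fun y => (g y ^ n) • gradient (lap g) y with hVdef
  have hVc : HasCompactSupport V := by
    refine hgc.mono' (fun y hy => subset_tsupport g ?_)
    intro h0
    apply hy
    simp [hVdef, h0, Real.zero_rpow hn.ne']
  have hg1 : ContDiff ℝ 1 g := hg4.of_le (by norm_num)
  have hVi : ∀ i, ContDiff ℝ 1 (fun y => V y i) := fun i =>
    (EuclideanSpace.proj i : EuclideanSpace ℝ (Fin N) →L[ℝ] ℝ).contDiff.comp hV
  have hVic : ∀ i, HasCompactSupport (fun y => V y i) := fun i =>
    hVc.comp_left (g := fun w : EuclideanSpace ℝ (Fin N) => w i) (by simp)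
  have hyi : ∀ i : Fin N, ContDiff ℝ 1 (fun y : EuclideanSpace ℝ (Fin N) => y i) := fun i =>
    (EuclideanSpace.proj i : EuclideanSpace ℝ (Fin N) →L[ℝ] ℝ).contDiff
  have hGi : ∀ i : Fin N, ContDiff ℝ 1 (fun y : EuclideanSpace ℝ (Fin N) => y i * g y) :=
    fun i => (hyi i).mul hg1
  have hGic : ∀ i : Fin N, HasCompactSupport (fun y : EuclideanSpace ℝ (Fin N) => y i * g y) :=
    fun i => hgc.mul_left
  have hfd : ∀ (i : Fin N) y, fderiv ℝ (fun y : EuclideanSpace ℝ (Fin N) => y i * g y) y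
      (EuclideanSpace.single i 1) = y i * fderiv ℝ g y (EuclideanSpace.single i 1) + g y := by
    intro i y
    have h1 : HasFDerivAt (fun y : EuclideanSpace ℝ (Fin N) => y i)
      (EuclideanSpace.proj i : EuclideanSpace ℝ (Fin N) →L[ℝ] ℝ) y :=
      (EuclideanSpace.proj i : EuclideanSpace ℝ (Fin N) →L[ℝ] ℝ).hasFDerivAt
    have h2 := h1.mul ((hg1.differentiable (by norm_num)) y).hasFDerivAt
    rw [show (fun y : EuclideanSpace ℝ (Fin N) => y i * g y) = (fun y => y i) * g from rfl,
      h2.fderiv]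
    simp
  have hinner : ∀ y : EuclideanSpace ℝ (Fin N), ⟪y, gradient g y⟫
      = ∑ i, y i * fderiv ℝ g y (EuclideanSpace.single i 1) := by
    intro y
    rw [inner_gradient_right]
    have hy : y = ∑ i, y i • EuclideanSpace.single i (1 : ℝ) := by
      ext j
      simp [Finset.sum_apply, Pi.single_apply]
    conv_lhs => rw [hy]
    rw [← hy]
    simp only [conj_trivial]
    conv_lhs => arg 2; rw [hy]
    simp [map_sum]
  have key : ∀ y, g y ^ p = ∑ i, (β * fderiv ℝ (fun y : EuclideanSpace ℝ (Fin N) => y i * g y) y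
      (EuclideanSpace.single i 1) - fderiv ℝ (fun y => V y i) y (EuclideanSpace.single i 1)) := by
    intro y
    have h := heq y
    rw [hinner] at h
    simp only [hfd]
    rw [Finset.sum_sub_distrib, ← Finset.mul_sum, Finset.sum_add_distrib]
    simp only [diverg] at h
    simp only [Finset.sum_const, Finset.card_univ, Fintype.card_fin, nsmul_eq_mul]
    linarith
  have hint : ∫ y, g y ^ p = 0 := by
    simp only [key]
    rw [integral_finsetSum]
    · refine Finset.sum_eq_zero fun i _ => ?_
      rw [integral_sub ((aux_int_fderiv _ (hGi i) (hGic i) _).1.const_mul β)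
        (aux_int_fderiv _ (hVi i) (hVic i) _).1, integral_const_mul,
        (aux_int_fderiv _ (hGi i) (hGic i) _).2, (aux_int_fderiv _ (hVi i) (hVic i) _).2]
      simp
    · intro i _
      exact ((aux_int_fderiv _ (hGi i) (hGic i) _).1.const_mul β).sub
        (aux_int_fderiv _ (hVi i) (hVic i) _).1
  by_contra hne
  obtain ⟨x, hx⟩ := Function.ne_iff.mp hne
  have hpos : 0 < ∫ y, g y ^ p :=
    Continuous.integral_pos_of_hasCompactSupport_nonneg_nonzero (x := x)
      (hg1.continuous.rpow_const (fun _ => Or.inr hp0.le))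
      (hgc.comp_left (g := fun t : ℝ => t ^ p) (Real.zero_rpow hp0.ne'))
      (fun y => Real.rpow_nonneg (hg0 y) p)
      (by
        have : 0 < g x := lt_of_le_of_ne (hg0 x) (Ne.symm hx)
        exact (Real.rpow_pos_of_pos this p).ne')
  exact hpos.ne' hint
end

section
/- Let N ≥ 1 be an integer, a > 0, c₀ = 1/(8(N+2)(N+4)), β = 1/(N+4), and define F : ℝ^N → ℝ by F(y) = c₀(a² − ‖y‖²)². Then ∇(ΔF)(y) = β y for every y ∈ ℝ^N, and consequently −div(F ∇(ΔF))(y) + β y·∇F(y) + β N F(y) = 0 for every y ∈ ℝ^N. Thus F is the explicit source-type similarity profile of the thin film equation with n = 1. -/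
open scoped RealInnerProductSpace

theorem aux_hasFDerivAt_normSq {N : ℕ} (y : EuclideanSpace ℝ (Fin N)) :
    HasFDerivAt (fun z : EuclideanSpace ℝ (Fin N) => ‖z‖ ^ 2) ((2 : ℝ) • innerSL ℝ y) y := by
  have h := (hasStrictFDerivAt_norm_sq y).hasFDerivAt
  refine HasFDerivAt.congr_fderiv (h) (ContinuousLinearMap.ext fun v => ?_)
  simp

theorem aux_hasFDerivAt_coord {N : ℕ} (i : Fin N) (y : EuclideanSpace ℝ (Fin N)) :
    HasFDerivAt (fun z : EuclideanSpace ℝ (Fin N) => z i)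
      (EuclideanSpace.proj i : EuclideanSpace ℝ (Fin N) →L[ℝ] ℝ) y :=
  (EuclideanSpace.proj i : EuclideanSpace ℝ (Fin N) →L[ℝ] ℝ).hasFDerivAt

theorem aux_inner_single {N : ℕ} (i : Fin N) (y : EuclideanSpace ℝ (Fin N)) :
    ⟪y, EuclideanSpace.single i (1 : ℝ)⟫ = y i := by
  simp [EuclideanSpace.inner_single_right]

/-- `F(y) = c₀ (a² - ‖y‖²)²` is the explicit source-type similarity profile of the
thin film equation with `n = 1`: `∇(ΔF) = β y` and
`-div(F ∇ΔF) + β y·∇F + β N F = 0`. -/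
theorem explicit_similarity_profile_n_eq_one
    (N : ℕ) (hN : 1 ≤ N) (a : ℝ) (ha : 0 < a) (c₀ β : ℝ)
    (hc : c₀ = 1 / (8 * (N + 2) * (N + 4))) (hβ : β = 1 / (N + 4))
    (F : EuclideanSpace ℝ (Fin N) → ℝ)
    (hF : ∀ y, F y = c₀ * (a ^ 2 - ‖y‖ ^ 2) ^ 2) :
    (∀ y, gradient (lap F) y = β • y) ∧
    (∀ y, -diverg (fun z => F z • gradient (lap F) z) y
        + β * ⟪y, gradient F y⟫ + β * N * F y = 0) := by
  have hF' : F = fun y => c₀ * (a ^ 2 - ‖y‖ ^ 2) ^ 2 := funext hF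
  have hsq : ∀ y : EuclideanSpace ℝ (Fin N), ∑ i, y i ^ 2 = ‖y‖ ^ 2 := fun y => by
    rw [EuclideanSpace.real_norm_sq_eq]
  have hdF : ∀ y, HasFDerivAt F ((-4 * c₀ * (a ^ 2 - ‖y‖ ^ 2)) • innerSL ℝ y) y := by
    intro y
    rw [hF']
    have h := (((aux_hasFDerivAt_normSq y).const_sub (a ^ 2)).pow 2).const_mul c₀
    refine HasFDerivAt.congr_fderiv (h) (ContinuousLinearMap.ext fun v => ?_)
    simp
    ring
  have hFi : ∀ i : Fin N, (fun y => fderiv ℝ F y (EuclideanSpace.single i 1))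
      = fun y => (-4 * c₀ * (a ^ 2 - ‖y‖ ^ 2)) * y i := by
    intro i
    funext y
    rw [(hdF y).fderiv]
    simp [EuclideanSpace.inner_single_right]
  have hlap : lap F = fun y => c₀ * (4 * (N + 2) * ‖y‖ ^ 2 - 4 * N * a ^ 2) := by
    funext y
    have h2 : ∀ i : Fin N, fderiv ℝ (fun y => fderiv ℝ F y (EuclideanSpace.single i 1)) y
        (EuclideanSpace.single i 1) = 8 * c₀ * y i ^ 2 + (-4 * c₀ * (a ^ 2 - ‖y‖ ^ 2)) := by
      intro i
      rw [hFi i]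
      have h := (((aux_hasFDerivAt_normSq y).const_sub (a ^ 2)).const_mul (-4 * c₀)).fun_mul
        (aux_hasFDerivAt_coord i y)
      rw [HasFDerivAt.fderiv h]
      simp [EuclideanSpace.inner_single_right]
      ring
    unfold lap
    rw [Finset.sum_congr rfl (fun i _ => h2 i), Finset.sum_add_distrib, ← Finset.mul_sum, hsq]
    simp
    ring
  have hN2 : (N : ℝ) + 2 ≠ 0 := by positivity
  have hN4 : (N : ℝ) + 4 ≠ 0 := by positivity
  have hcb : 8 * c₀ * (N + 2) = β := by
    rw [hc, hβ]
    field_simp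
  have hgl : ∀ y, gradient (lap F) y = β • y := by
    intro y
    apply HasGradientAt.gradient
    rw [hasGradientAt_iff_hasFDerivAt, hlap]
    have h := (((aux_hasFDerivAt_normSq y).const_mul (4 * ((N : ℝ) + 2))).sub_const
      (4 * N * a ^ 2)).const_mul c₀
    refine HasFDerivAt.congr_fderiv (h) (ContinuousLinearMap.ext fun v => ?_)
    simp [← hcb, inner_smul_left]
    ring
  refine ⟨hgl, fun y => ?_⟩
  have hgF : gradient F y = (-4 * c₀ * (a ^ 2 - ‖y‖ ^ 2)) • y := by
    apply HasGradientAt.gradient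
    rw [hasGradientAt_iff_hasFDerivAt]
    refine HasFDerivAt.congr_fderiv (hdF y) (ContinuousLinearMap.ext fun v => ?_)
    simp [inner_smul_left]
  have hdiv : diverg (fun z => F z • gradient (lap F) z) y
      = β * (-4 * c₀ * (a ^ 2 - ‖y‖ ^ 2)) * ‖y‖ ^ 2 + β * N * F y := by
    have h2 : ∀ i : Fin N, fderiv ℝ (fun z => (F z • gradient (lap F) z) i) y
        (EuclideanSpace.single i 1)
        = β * (-4 * c₀ * (a ^ 2 - ‖y‖ ^ 2)) * y i ^ 2 + β * F y := by
      intro i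
      have he : (fun z => (F z • gradient (lap F) z) i) = fun z => F z * (β * z i) := by
        funext z
        rw [hgl]
        simp
      rw [he]
      have h := (hdF y).fun_mul ((aux_hasFDerivAt_coord i y).const_mul β)
      rw [HasFDerivAt.fderiv h]
      simp [EuclideanSpace.inner_single_right]
      ring
    unfold diverg
    rw [Finset.sum_congr rfl (fun i _ => h2 i), Finset.sum_add_distrib, ← Finset.mul_sum, hsq]
    simp
    ring
  rw [hdiv, hgF, inner_smul_right, real_inner_self_eq_norm_sq]
  ring
end

section
/- Let n > 0, β ∈ ℝ, let I ⊆ ℝ be an open interval, and let F ∈ C⁴(I) with F > 0 on I satisfy F(y)^n F'''(y) = β y F(y) for all y ∈ I. Define Y(y) = (4/n)F(y) − y F'(y). Then F(y)^n Y'''(y) = (1−n) β y Y(y) on I; in particular Y satisfies the linearised equation −(F^n Y''')'(y) − n (F^{n−1} Y F''')'(y) + β (y Y(y))' = 0 on I, i.e., Y is an eigenfunction with eigenvalue 0 of the linearised thin-film similarity operator A'(F). -/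
/-- If `F > 0` solves the once-integrated similarity equation `F^n F''' = β y F` on an
open interval `I`, then `Y = (4/n)F - yF'` satisfies `F^n Y''' = (1-n) β y Y` on `I`;
in particular `Y` is a zero eigenfunction of the linearised thin-film operator:
`-(F^n Y''')' - n (F^{n-1} Y F''')' + β (yY)' = 0` on `I`. -/
theorem zero_eigenfunction_of_linearised_TFE
    (n β : ℝ) (hn : 0 < n) (I : Set ℝ) (hIopen : IsOpen I) (hIint : I.OrdConnected)
    (F : ℝ → ℝ) (hF : ContDiffOn ℝ 4 F I) (hFpos : ∀ y ∈ I, 0 < F y)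
    (hode : ∀ y ∈ I, F y ^ n * deriv (deriv (deriv F)) y = β * y * F y)
    (Y : ℝ → ℝ) (hY : Y = fun y => (4 / n) * F y - y * deriv F y) :
    (∀ y ∈ I, F y ^ n * deriv (deriv (deriv Y)) y = (1 - n) * β * y * Y y) ∧
    (∀ y ∈ I,
      -(deriv (fun z => F z ^ n * deriv (deriv (deriv Y)) z) y)
        - n * deriv (fun z => F z ^ (n - 1) * Y z * deriv (deriv (deriv F)) z) y
        + β * deriv (fun z => z * Y z) y = 0) := by
  have h1 : ContDiffOn ℝ 3 (deriv F) I := hF.deriv_of_isOpen hIopen (by norm_num)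
  have h2 : ContDiffOn ℝ 2 (deriv (deriv F)) I := h1.deriv_of_isOpen hIopen (by norm_num)
  have h3 : ContDiffOn ℝ 1 (deriv (deriv (deriv F))) I :=
    h2.deriv_of_isOpen hIopen (by norm_num)
  have d0 : ∀ y ∈ I, HasDerivAt F (deriv F y) y := fun y hy =>
    ((hF.differentiableOn (by norm_num)).differentiableAt (hIopen.mem_nhds hy)).hasDerivAt
  have d1 : ∀ y ∈ I, HasDerivAt (deriv F) (deriv (deriv F) y) y := fun y hy =>
    ((h1.differentiableOn (by norm_num)).differentiableAt (hIopen.mem_nhds hy)).hasDerivAt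
  have d2 : ∀ y ∈ I, HasDerivAt (deriv (deriv F)) (deriv (deriv (deriv F)) y) y := fun y hy =>
    ((h2.differentiableOn (by norm_num)).differentiableAt (hIopen.mem_nhds hy)).hasDerivAt
  have d3 : ∀ y ∈ I, HasDerivAt (deriv (deriv (deriv F)))
      (deriv (deriv (deriv (deriv F))) y) y := fun y hy =>
    ((h3.differentiableOn (by norm_num)).differentiableAt (hIopen.mem_nhds hy)).hasDerivAt
  have congrD : ∀ (f g : ℝ → ℝ), (∀ y ∈ I, f y = g y) → ∀ y ∈ I, deriv f y = deriv g y := by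
    intro f g h y hy
    apply Filter.EventuallyEq.deriv_eq
    filter_upwards [hIopen.mem_nhds hy] with z hz using h z hz
  have step : ∀ (c : ℝ) (f : ℝ → ℝ) (g h : ℝ → ℝ), (∀ y ∈ I, HasDerivAt f (g y) y) →
      (∀ y ∈ I, HasDerivAt g (h y) y) → ∀ y ∈ I,
      deriv (fun z => c * f z - z * g z) y = (c - 1) * g y - y * h y := by
    intro c f g h hf hg y hy
    refine (((hf y hy).const_mul c).sub ((hasDerivAt_id' y).mul (hg y hy))).deriv.trans ?_
    ring
  have Y1 : ∀ y ∈ I, deriv Y y = (4 / n - 1) * deriv F y - y * deriv (deriv F) y := by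
    rw [hY]
    exact step _ _ _ _ d0 d1
  have Y2 : ∀ y ∈ I, deriv (deriv Y) y
      = (4 / n - 1 - 1) * deriv (deriv F) y - y * deriv (deriv (deriv F)) y := by
    intro y hy
    rw [congrD _ _ Y1 y hy]
    exact step _ _ _ _ d1 d2 y hy
  have Y3 : ∀ y ∈ I, deriv (deriv (deriv Y)) y
      = (4 / n - 1 - 1 - 1) * deriv (deriv (deriv F)) y
        - y * deriv (deriv (deriv (deriv F))) y := by
    intro y hy
    rw [congrD _ _ Y2 y hy]
    exact step _ _ _ _ d2 d3 y hy
  have hpow : ∀ y ∈ I, F y ^ (n - 1) * deriv (deriv (deriv F)) y = β * y := by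
    intro y hy
    have hp := hFpos y hy
    have h := hode y hy
    rw [Real.rpow_sub_one hp.ne']
    field_simp
    linarith
  have key : ∀ y ∈ I, F y ^ n * deriv (deriv (deriv Y)) y = (1 - n) * β * y * Y y := by
    intro y hy
    have hp := hFpos y hy
    have e := congrD _ _ hode y hy
    have l := ((d0 y hy).rpow_const (p := n) (Or.inl hp.ne')).mul (d3 y hy)
    have r := ((hasDerivAt_id' y).const_mul β).mul (d0 y hy)
    have e' := l.deriv.symm.trans (e.trans r.deriv)
    have o := hode y hy
    have q := hpow y hy
    rw [Y3 y hy, hY]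
    have hc : 4 / n * n = 4 := by field_simp
    linear_combination (4 / n - 3) * o - y * e' + n * y * deriv F y * q + β * y * F y * hc
  refine ⟨key, fun y hy => ?_⟩
  have a1 : deriv (fun z => F z ^ n * deriv (deriv (deriv Y)) z) y
      = (1 - n) * β * deriv (fun z => z * Y z) y := by
    rw [← deriv_const_mul_field]
    refine congrD _ _ (fun z hz => ?_) y hy
    rw [key z hz]; ring
  have a2 : deriv (fun z => F z ^ (n - 1) * Y z * deriv (deriv (deriv F)) z) y
      = β * deriv (fun z => z * Y z) y := by
    rw [← deriv_const_mul_field]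
    refine congrD _ _ (fun z hz => ?_) y hy
    linear_combination Y z * hpow z hz
  rw [a1, a2]; ring
end

section
/- For every even natural number k there exists a nonzero real polynomial ψ of degree k + 2 with ψ(1) = ψ(−1) = 0 such that ((1 − y²)² ψ''')'(y) = k(k+1)(k+2)(k+3) ψ(y) for all y ∈ ℝ. Equivalently, for N = 1 and n = 1 the linearised thin-film operator A'(F)Y = −(F Y''')' with F(y) = (1−y²)²/120 possesses, for each even k, a polynomial eigenfunction of degree k+2 vanishing at the interface points ±1, with eigenvalue of modulus c₀ k(k+2)(k+1)(k+3) where c₀ = 1/120; for k = 0 the eigenfunction is ψ₀(y) = b₀(y² − 1) with eigenvalue 0. -/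
open Polynomial in
/-- Differentiated Rodrigues identity for `u = (X² - 1)^(k+1)`. -/
lemma rodrigues_aux (k m : ℕ) :
    ((X : ℝ[X]) ^ 2 - 1) * derivative^[m + 2] (((X : ℝ[X]) ^ 2 - 1) ^ (k + 1)) =
      2 * ((k : ℝ[X]) - (m : ℝ[X])) * X * derivative^[m + 1] (((X : ℝ[X]) ^ 2 - 1) ^ (k + 1)) +
      ((m : ℝ[X]) + 1) * (2 * (k : ℝ[X]) + 2 - (m : ℝ[X])) * derivative^[m] (((X : ℝ[X]) ^ 2 - 1) ^ (k + 1)) := by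
  induction m with
  | zero =>
    have h : ((X : ℝ[X]) ^ 2 - 1) * derivative (((X : ℝ[X]) ^ 2 - 1) ^ (k + 1)) =
        2 * ((k : ℝ[X]) + 1) * X * ((X : ℝ[X]) ^ 2 - 1) ^ (k + 1) := by
      rw [derivative_pow]
      simp
      ring
    generalize ((X : ℝ[X]) ^ 2 - 1) ^ (k + 1) = u at h ⊢
    have h' := congrArg derivative h
    simp at h' ⊢
    linear_combination h'
  | succ m ih =>
    generalize ((X : ℝ[X]) ^ 2 - 1) ^ (k + 1) = u at ih ⊢
    have h' := congrArg derivative ih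
    simp only [Function.iterate_succ_apply'] at h' ⊢
    simp at h' ⊢
    linear_combination h'

open Polynomial in
lemma natDegree_iter_aux (p : ℝ[X]) (j : ℕ) :
    (derivative^[j] p).natDegree = p.natDegree - j := by
  induction j with
  | zero => simp
  | succ j ih =>
    rw [Function.iterate_succ_apply', natDegree_derivative, ih]
    omega

/-- For every even `k` the linearised thin-film operator (case `N = 1`, `n = 1`) has a
polynomial eigenfunction of degree `k+2` vanishing at `±1`:
`((1-y²)² ψ''')'(y) = k(k+1)(k+2)(k+3) ψ(y)`. -/
theorem polynomial_eigenfunctions_TFE (k : ℕ) (hk : Even k) :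
    ∃ ψ : Polynomial ℝ, ψ ≠ 0 ∧ ψ.natDegree = k + 2 ∧
      ψ.eval 1 = 0 ∧ ψ.eval (-1) = 0 ∧
      ∀ y : ℝ,
        (Polynomial.derivative
          ((1 - Polynomial.X ^ 2) ^ 2 * (Polynomial.derivative^[3] ψ))).eval y
        = (k : ℝ) * (k + 1) * (k + 2) * (k + 3) * ψ.eval y := by
  have hode := rodrigues_aux k k
  have hdeg : (Polynomial.derivative^[k]
      (((Polynomial.X : Polynomial ℝ) ^ 2 - 1) ^ (k + 1))).natDegree = k + 2 := by
    have h2 : ((Polynomial.X : Polynomial ℝ) ^ 2 - 1).natDegree = 2 := by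
      simpa using Polynomial.natDegree_X_pow_sub_C (n := 2) (r := (1 : ℝ))
    rw [natDegree_iter_aux, Polynomial.natDegree_pow, h2]
    omega
  simp only [Function.iterate_succ_apply'] at hode
  generalize Polynomial.derivative^[k]
      (((Polynomial.X : Polynomial ℝ) ^ 2 - 1) ^ (k + 1)) = φ at hode hdeg
  have hpos : ((k : ℝ) + 1) * (k + 2) ≠ 0 := by positivity
  have hev : ∀ y : ℝ, (y ^ 2 - 1) * (φ.derivative.derivative).eval y =
      ((k : ℝ) + 1) * (k + 2) * φ.eval y := by
    intro y
    have := congrArg (Polynomial.eval y) hode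
    simp at this
    linear_combination this
  refine ⟨φ, ?_, hdeg, ?_, ?_, ?_⟩
  · rintro rfl
    simp at hdeg
  · have := hev 1
    simpa [hpos] using this
  · have := hev (-1)
    norm_num at this
    rcases this with (h | h) | h
    · exact absurd h (by positivity)
    · exact absurd h (by positivity)
    · exact h
  · intro y
    have h1 := congrArg Polynomial.derivative hode
    have h2 := congrArg Polynomial.derivative h1
    have e0 := hev y
    have e2 := congrArg (Polynomial.eval y) h2
    simp at e2
    simp [Function.iterate_succ_apply', Polynomial.derivative_pow]
    linear_combination (y ^ 2 - 1) * e2 + (((k : ℝ) + 1) * (k + 2) - 2) * e0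
end

section
/- Let a > 0, and on (−a, a) set f(y) = (a² − y²)²/120 and ρ(y) = (a² − y²)^{−1}. Define the linearised thin-film operator L Y = −(f Y''')' − (Y f''')' + (1/5)(y Y)'. Then for all Y, W ∈ C_c^∞((−a,a)) one has ∫_{−a}^{a} (LY)(y) W(y) ρ(y) dy = ∫_{−a}^{a} Y(y) (LW)(y) ρ(y) dy; i.e., for n = 1 the linearised operator is symmetric in the weighted space L²_ρ((−a,a)). -/
open MeasureTheory

lemma aux_hasDeriv {Z : ℝ → ℝ} (h : ContDiff ℝ (⊤ : ℕ∞) Z) :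
    ContDiff ℝ (⊤ : ℕ∞) (deriv Z) ∧ ∀ y, HasDerivAt Z (deriv Z y) y := by
  refine ⟨?_, fun y => ?_⟩
  · exact (contDiff_infty_iff_deriv.1 h).2
  · exact ((contDiff_infty_iff_deriv.1 h).1 y).hasDerivAt

lemma aux_f3 (a : ℝ) (f : ℝ → ℝ) (hf : ∀ y, f y = (a ^ 2 - y ^ 2) ^ 2 / 120) :
    deriv (deriv (deriv f)) = fun y => y / 5 := by
  have h0 : f = fun y => (a ^ 2 - y ^ 2) ^ 2 / 120 := funext hf
  have h1 : deriv f = fun y => (y ^ 3 - a ^ 2 * y) / 30 := by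
    funext y
    rw [h0]
    have := ((((hasDerivAt_id y).pow 2).const_sub (a ^ 2)).pow 2).div_const 120
    refine HasDerivAt.deriv (this.congr_deriv ?_)
    simp
    ring
  have h2 : deriv (deriv f) = fun y => (3 * y ^ 2 - a ^ 2) / 30 := by
    funext y
    rw [h1]
    have := (((hasDerivAt_id y).pow 3).sub ((hasDerivAt_id y).const_mul (a ^ 2))).div_const 30
    refine HasDerivAt.deriv (this.congr_deriv ?_)
    simp
  funext y
  rw [h2]
  have := ((((hasDerivAt_id y).pow 2).const_mul 3).sub_const (a ^ 2)).div_const 30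
  refine HasDerivAt.deriv (this.congr_deriv ?_)
  simp
  ring

lemma aux_L (a : ℝ) (f : ℝ → ℝ) (hf : ∀ y, f y = (a ^ 2 - y ^ 2) ^ 2 / 120)
    {Z : ℝ → ℝ} (h : ContDiff ℝ (⊤ : ℕ∞) Z) (y : ℝ) :
    -(deriv (fun z => f z * deriv (deriv (deriv Z)) z) y)
        - deriv (fun z => Z z * deriv (deriv (deriv f)) z) y
        + (1 / 5) * deriv (fun z => z * Z z) y =
    -(1 / 120) * (a ^ 2 - y ^ 2) * ((a ^ 2 - y ^ 2) * deriv (deriv (deriv (deriv Z))) y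
      - 4 * y * deriv (deriv (deriv Z)) y) := by
  obtain ⟨c1, d0⟩ := aux_hasDeriv h
  obtain ⟨c2, d1⟩ := aux_hasDeriv c1
  obtain ⟨c3, d2⟩ := aux_hasDeriv c2
  obtain ⟨c4, d3⟩ := aux_hasDeriv c3
  have h0 : f = fun y => (a ^ 2 - y ^ 2) ^ 2 / 120 := funext hf
  rw [aux_f3 a f hf, h0]
  have e1 := (((((hasDerivAt_id y).pow 2).const_sub (a ^ 2)).pow 2).div_const 120).mul (d3 y)
  have e2 := (d0 y).mul ((hasDerivAt_id y).div_const 5)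
  have e3 := (hasDerivAt_id y).mul (d0 y)
  have f1 : deriv (fun z => (a ^ 2 - z ^ 2) ^ 2 / 120 * deriv (deriv (deriv Z)) z) y = _ := e1.deriv
  have f2 : deriv (fun z => Z z * (z / 5)) y = _ := e2.deriv
  have f3 : deriv (fun z => z * Z z) y = _ := e3.deriv
  rw [f1, f2, f3]
  simp
  ring

lemma aux_int (a : ℝ) (ha : 0 < a) {Y W : ℝ → ℝ} (hY : ContDiff ℝ (⊤ : ℕ∞) Y)
    (hW : ContDiff ℝ (⊤ : ℕ∞) W) (y1 : Y a = 0) (y2 : Y (-a) = 0)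
    (w1 : W a = 0) (w2 : W (-a) = 0) :
    ∫ y in (-a)..a, (-(1 / 120) * ((a ^ 2 - y ^ 2) * deriv (deriv (deriv (deriv Y))) y
      - 4 * y * deriv (deriv (deriv Y)) y)) * W y =
    ∫ y in (-a)..a, Y y * (-(1 / 120) * ((a ^ 2 - y ^ 2) * deriv (deriv (deriv (deriv W))) y
      - 4 * y * deriv (deriv (deriv W)) y)) := by
  obtain ⟨c1, d0⟩ := aux_hasDeriv hY
  obtain ⟨c2, d1⟩ := aux_hasDeriv c1
  obtain ⟨c3, d2⟩ := aux_hasDeriv c2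
  obtain ⟨c4, d3⟩ := aux_hasDeriv c3
  obtain ⟨b1, e0⟩ := aux_hasDeriv hW
  obtain ⟨b2, e1⟩ := aux_hasDeriv b1
  obtain ⟨b3, e2⟩ := aux_hasDeriv b2
  obtain ⟨b4, e3⟩ := aux_hasDeriv b3
  have k0 := hY.continuous
  have k3 := c3.continuous
  have k4 := c4.continuous
  have l0 := hW.continuous
  have l3 := b3.continuous
  have l4 := b4.continuous
  generalize deriv (deriv (deriv (deriv Y))) = Y4 at *
  generalize deriv (deriv (deriv Y)) = Y3 at *
  generalize deriv (deriv Y) = Y2 at *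
  generalize deriv Y = Y1 at *
  generalize deriv (deriv (deriv (deriv W))) = W4 at *
  generalize deriv (deriv (deriv W)) = W3 at *
  generalize deriv (deriv W) = W2 at *
  generalize deriv W = W1 at *
  have cA : Continuous fun y => (-(1 / 120) * ((a ^ 2 - y ^ 2) * Y4 y - 4 * y * Y3 y)) * W y := by
    fun_prop
  have cB : Continuous fun y => Y y * (-(1 / 120) * ((a ^ 2 - y ^ 2) * W4 y - 4 * y * W3 y)) := by
    fun_prop
  rw [← sub_eq_zero, ← intervalIntegral.integral_sub (cA.intervalIntegrable _ _)
    (cB.intervalIntegrable _ _)]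
  have key : ∀ y ∈ Set.uIcc (-a) a, HasDerivAt
      (fun y => -(1 / 120) * (W y * ((a ^ 2 - y ^ 2) * Y3 y - 2 * y * Y2 y)
        - W1 y * ((a ^ 2 - y ^ 2) * Y2 y)
        - Y y * ((a ^ 2 - y ^ 2) * W3 y - 2 * y * W2 y)
        + Y1 y * ((a ^ 2 - y ^ 2) * W2 y)
        + 2 * (W y * Y1 y - Y y * W1 y)))
      ((-(1 / 120) * ((a ^ 2 - y ^ 2) * Y4 y - 4 * y * Y3 y)) * W y
        - Y y * (-(1 / 120) * ((a ^ 2 - y ^ 2) * W4 y - 4 * y * W3 y))) y := by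
    intro y _
    have p : HasDerivAt (fun y : ℝ => a ^ 2 - y ^ 2) (-(2 * y)) y :=
      (((hasDerivAt_id y).pow 2).const_sub (a ^ 2)).congr_deriv (by simp)
    have q : HasDerivAt (fun y : ℝ => 2 * y) 2 y :=
      ((hasDerivAt_id y).const_mul 2).congr_deriv (by simp)
    have t := ((((((e0 y).mul ((p.mul (d3 y)).sub (q.mul (d2 y)))).sub
      ((e1 y).mul (p.mul (d2 y)))).sub
      ((d0 y).mul ((p.mul (e3 y)).sub (q.mul (e2 y))))).add
      ((d1 y).mul (p.mul (e2 y)))).add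
      ((((e0 y).mul (d1 y)).sub ((d0 y).mul (e1 y))).const_mul 2)).const_mul (-(1 / 120) : ℝ)
    refine t.congr_deriv ?_
    simp only [Pi.mul_apply, Pi.sub_apply]
    ring
  rw [intervalIntegral.integral_eq_sub_of_hasDerivAt key ((cA.sub cB).intervalIntegrable _ _)]
  simp [y1, y2, w1, w2]

/-- For `n = 1` the linearised thin-film operator
`L Y = -(f Y''')' - (Y f''')' + (1/5)(yY)'`, with `f(y) = (a²-y²)²/120`, is symmetric
in the weighted space `L²_ρ((-a,a))` with weight `ρ(y) = (a²-y²)⁻¹`. -/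
theorem linearised_TFE_symmetric_n_eq_one
    (a : ℝ) (ha : 0 < a) (f ρ : ℝ → ℝ)
    (hf : ∀ y, f y = (a ^ 2 - y ^ 2) ^ 2 / 120)
    (hρ : ∀ y, ρ y = (a ^ 2 - y ^ 2)⁻¹)
    (L : (ℝ → ℝ) → ℝ → ℝ)
    (hL : ∀ Z y, L Z y =
      -(deriv (fun z => f z * deriv (deriv (deriv Z)) z) y)
        - deriv (fun z => Z z * deriv (deriv (deriv f)) z) y
        + (1 / 5) * deriv (fun z => z * Z z) y)
    (Y W : ℝ → ℝ)
    (hYsm : ContDiff ℝ (⊤ : ℕ∞) Y) (hYcs : HasCompactSupport Y)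
    (hYsupp : tsupport Y ⊆ Set.Ioo (-a) a)
    (hWsm : ContDiff ℝ (⊤ : ℕ∞) W) (hWcs : HasCompactSupport W)
    (hWsupp : tsupport W ⊆ Set.Ioo (-a) a) :
    ∫ y in Set.Ioo (-a) a, L Y y * W y * ρ y
      = ∫ y in Set.Ioo (-a) a, Y y * L W y * ρ y := by
  have bd : ∀ Z : ℝ → ℝ, tsupport Z ⊆ Set.Ioo (-a) a → Z a = 0 ∧ Z (-a) = 0 := fun Z hZ =>
    ⟨image_eq_zero_of_notMem_tsupport fun h => lt_irrefl _ (hZ h).2,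
     image_eq_zero_of_notMem_tsupport fun h => lt_irrefl _ (hZ h).1⟩
  have key := aux_int a ha hYsm hWsm (bd Y hYsupp).1 (bd Y hYsupp).2 (bd W hWsupp).1 (bd W hWsupp).2
  have hle : -a ≤ a := by linarith
  rw [intervalIntegral.integral_of_le hle, intervalIntegral.integral_of_le hle,
    integral_Ioc_eq_integral_Ioo, integral_Ioc_eq_integral_Ioo] at key
  have hp : ∀ y ∈ Set.Ioo (-a) a, a ^ 2 - y ^ 2 ≠ 0 := by
    intro y hy
    have : 0 < (a - y) * (a + y) := mul_pos (by linarith [hy.2]) (by linarith [hy.1])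
    intro h
    nlinarith
  refine Eq.trans (setIntegral_congr_fun measurableSet_Ioo ?_)
    (key.trans (setIntegral_congr_fun measurableSet_Ioo ?_))
  · intro y hy
    have := hp y hy
    simp only [hL, hρ, aux_L a f hf hYsm]
    field_simp
  · intro y hy
    have := hp y hy
    simp only [hL, hρ, aux_L a f hf hWsm]
    field_simp
end

section
/- Consider the equation φ'''(s) + 6φ''(s) + 11φ'(s) + 6φ(s) + sgn(φ(s)) = 0 (the oscillatory-component equation with n = 1, μ = 3). There exists a nonconstant periodic solution φ : ℝ → ℝ of changing sign — φ of class C² with φ'' locally absolutely continuous, satisfying the equation at every s with φ(s) ≠ 0 — whose minimal period equals T = −2 ln((3−√5)/2) = 1.9248...; moreover this periodic solution is unique up to translations of s. -/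
open MeasureTheory intervalIntegral

/-- A solution of the oscillatory-component equation with `n = 1`, `μ = 3`:
`φ` is `C²`, `φ''` is locally absolutely continuous (expressed via the fundamental
theorem of calculus for its a.e. derivative `φ'''`), and
`φ''' + 6φ'' + 11φ' + 6φ + sgn(φ) = 0` holds wherever `φ ≠ 0`. -/
def IsOscSolOne (φ : ℝ → ℝ) : Prop :=
  ContDiff ℝ 2 φ ∧
  (∀ a b : ℝ, deriv (deriv φ) b - deriv (deriv φ) a
      = ∫ s in a..b, deriv (deriv (deriv φ)) s) ∧
  (∀ s : ℝ, φ s ≠ 0 →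
    deriv (deriv (deriv φ)) s + 6 * deriv (deriv φ) s + 11 * deriv φ s
      + 6 * φ s + Real.sign (φ s) = 0)

structure OscFS (F0 F1 F2 : ℝ → ℝ) (L : ℝ) : Prop where
  hL : 1 < L
  d0 : ∀ x, 0 < x → HasDerivAt F0 (F1 x) x
  d1 : ∀ x, 0 < x → HasDerivAt F1 (F2 x) x
  c2 : ∀ x, 0 < x → ContinuousAt F2 x
  dp : ∀ x, 0 < x → 0 < F0 x → HasDerivAt F2 (-1) x
  dn : ∀ x, 0 < x → F0 x < 0 → HasDerivAt F2 1 x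
  s0 : ∀ x, 0 < x → F0 (L * x) = L ^ 3 * F0 x
  s1 : ∀ x, 0 < x → F1 (L * x) = L ^ 2 * F1 x
  s2 : ∀ x, 0 < x → F2 (L * x) = L * F2 x
  nz : ∃ x, 0 < x ∧ F0 x ≠ 0

namespace OscFS

variable {F0 F1 F2 : ℝ → ℝ} {L : ℝ}

theorem neg (h : OscFS F0 F1 F2 L) :
    OscFS (fun x => -F0 x) (fun x => -F1 x) (fun x => -F2 x) L where
  hL := h.hL
  d0 x hx := (h.d0 x hx).fun_neg
  d1 x hx := (h.d1 x hx).fun_neg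
  c2 x hx := (h.c2 x hx).fun_neg
  dp x hx hp := (h.dn x hx (by linarith)).fun_neg
  dn x hx hp := by simpa using (h.dp x hx (by linarith)).fun_neg
  s0 x hx := by simp only [h.s0 x hx]; ring
  s1 x hx := by simp only [h.s1 x hx]; ring
  s2 x hx := by simp only [h.s2 x hx]; ring
  nz := by
    obtain ⟨x, hx, hn⟩ := h.nz
    exact ⟨x, hx, neg_ne_zero.mpr hn⟩

theorem cont0 (h : OscFS F0 F1 F2 L) {x : ℝ} (hx : 0 < x) : ContinuousAt F0 x :=
  (h.d0 x hx).continuousAt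

/-- product with a function vanishing at the point -/
theorem prod_deriv {f g : ℝ → ℝ} {f' x : ℝ} (hf : HasDerivAt f f' x) (hx : f x = 0)
    (hg : ContinuousAt g x) : HasDerivAt (fun y => f y * g y) (f' * g x) x := by
  rw [hasDerivAt_iff_tendsto_slope] at hf ⊢
  have h2 := hf.mul (hg.tendsto.mono_left (nhdsWithin_le_nhds (s := {x}ᶜ)))
  refine h2.congr (fun y => ?_)
  simp only [slope_def_field, hx]
  ring

theorem dE (h : OscFS F0 F1 F2 L) {x : ℝ} (hx : 0 < x) :
    HasDerivAt (fun x => F0 x * F2 x - F1 x ^ 2 / 2) (-|F0 x|) x := by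
  have h1 : HasDerivAt (fun x => F1 x ^ 2 / 2) (F1 x * F2 x) x := by
    have := ((h.d1 x hx).fun_pow 2).div_const 2
    refine this.congr_deriv ?_
    push_cast; ring
  rcases lt_trichotomy (F0 x) 0 with h0 | h0 | h0
  · have := ((h.d0 x hx).fun_mul (h.dn x hx h0)).fun_sub h1
    refine this.congr_deriv ?_
    rw [abs_of_neg h0]; ring
  · have := (prod_deriv (h.d0 x hx) h0 (h.c2 x hx)).fun_sub h1
    refine this.congr_deriv ?_
    rw [h0]; simp
  · have := ((h.d0 x hx).fun_mul (h.dp x hx h0)).fun_sub h1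
    refine this.congr_deriv ?_
    rw [abs_of_pos h0]; ring

theorem E_anti (h : OscFS F0 F1 F2 L) :
    AntitoneOn (fun x => F0 x * F2 x - F1 x ^ 2 / 2) (Set.Ioi 0) := by
  apply antitoneOn_of_deriv_nonpos (convex_Ioi 0)
  · intro x hx
    exact (h.dE hx).continuousAt.continuousWithinAt
  · intro x hx
    rw [interior_Ioi] at hx
    exact (h.dE hx).differentiableAt.differentiableWithinAt
  · intro x hx
    rw [interior_Ioi] at hx
    rw [(h.dE hx).deriv]
    simp

theorem E_nonpos (h : OscFS F0 F1 F2 L) {x : ℝ} (hx : 0 < x) :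
    F0 x * F2 x - F1 x ^ 2 / 2 ≤ 0 := by
  have hL := h.hL
  have h1 := h.E_anti (a := x) (b := L * x) hx (by simp only [Set.mem_Ioi]; positivity)
    (by nlinarith)
  simp only [h.s0 x hx, h.s1 x hx, h.s2 x hx] at h1
  have h2 : (L ^ 4 - 1) * (F0 x * F2 x - F1 x ^ 2 / 2) ≤ 0 := by nlinarith
  have h3 : 0 < L ^ 4 - 1 := by
    have := one_lt_pow₀ hL (n := 4) (by norm_num)
    linarith
  by_contra hc
  push Not at hc
  nlinarith

theorem pow_ne (h : OscFS F0 F1 F2 L) (n : ℕ) : ∀ x, 0 < x → F0 (L ^ n * x) = (L ^ n) ^ 3 * F0 x := by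
  induction n with
  | zero => intro x hx; simp
  | succ n ih =>
    intro x hx
    have hL := h.hL
    have := h.s0 (L ^ n * x) (by positivity)
    rw [pow_succ, mul_comm (L ^ n) L, mul_assoc, this, ih x hx]
    ring

theorem E_neg (h : OscFS F0 F1 F2 L) {x : ℝ} (hx : 0 < x) :
    F0 x * F2 x - F1 x ^ 2 / 2 < 0 := by
  refine lt_of_le_of_ne (h.E_nonpos hx) (fun h0 => ?_)
  have hL := h.hL
  have hz : ∀ y, 0 < y → y ≤ x → F0 y * F2 y - F1 y ^ 2 / 2 = 0 := by
    intro y hy hyx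
    have h1 := h.E_anti (a := y) (b := x) hy hx hyx
    have h2 := h.E_nonpos hy
    simp only at h1
    linarith
  obtain ⟨x0, hx0, hn⟩ := h.nz
  obtain ⟨n, hn2⟩ := pow_unbounded_of_one_lt (x0 / x) hL
  have hp : 0 < L ^ n := by positivity
  set y := x0 / L ^ n with hy
  have hy0 : 0 < y := by positivity
  have hyx : y < x := by
    rw [hy, div_lt_iff₀ hp]
    rw [div_lt_iff₀ hx] at hn2
    linarith
  have h3 : F0 y = 0 := by
    have hd := h.dE hy0
    have hd2 : HasDerivAt (fun x => F0 x * F2 x - F1 x ^ 2 / 2) 0 y := by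
      apply (hasDerivAt_const y (0 : ℝ)).congr_of_eventuallyEq
      filter_upwards [Ioo_mem_nhds hy0 hyx] with z hz1
      exact hz z hz1.1 hz1.2.le
    have := hd.unique hd2
    simpa using this
  apply hn
  have h4 := h.pow_ne n y hy0
  rw [h3, hy, mul_div_cancel₀ _ hp.ne'] at h4
  simpa using h4

theorem simple (h : OscFS F0 F1 F2 L) {x : ℝ} (hx : 0 < x) (h0 : F0 x = 0) : F1 x ≠ 0 := by
  intro h1
  have := h.E_neg hx
  rw [h0, h1] at this
  simp at this

theorem isol (h : OscFS F0 F1 F2 L) {x : ℝ} (hx : 0 < x) (h0 : F0 x = 0) :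
    ∃ δ > 0, ∀ y, |y - x| < δ → y ≠ x → F0 y ≠ 0 := by
  have h1 := (h.d0 x hx).eventually_ne (c := 0) (h.simple hx h0)
  rw [eventually_nhdsWithin_iff, Metric.eventually_nhds_iff] at h1
  obtain ⟨δ, hδ, h2⟩ := h1
  exact ⟨δ, hδ, fun y hy hne => h2 (by rwa [Real.dist_eq]) hne⟩

theorem contOn (h : OscFS F0 F1 F2 L) {a b : ℝ} (ha : 0 < a) : ContinuousOn F0 (Set.Icc a b) :=
  fun x hx => (h.cont0 (lt_of_lt_of_le ha hx.1)).continuousWithinAt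

theorem next (h : OscFS F0 F1 F2 L) {c : ℝ} (hc : 0 < c) (h0 : F0 c = 0) :
    ∃ d, c < d ∧ F0 d = 0 ∧ ∀ x ∈ Set.Ioo c d, F0 x ≠ 0 := by
  have hL := h.hL
  obtain ⟨δ, hδ, hi⟩ := h.isol hc h0
  have hLc : F0 (L * c) = 0 := by rw [h.s0 c hc, h0, mul_zero]
  have hcL : c < L * c := by nlinarith
  have hge : c + δ ≤ L * c := by
    by_contra hlt
    push Not at hlt
    exact hi (L * c) (by rw [abs_of_pos (by linarith)]; linarith) (by linarith) hLc
  have hK : IsCompact (Set.Icc (c + δ) (L * c) ∩ F0 ⁻¹' {0}) :=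
    isCompact_Icc.of_isClosed_subset
      ((h.contOn (by linarith)).preimage_isClosed_of_isClosed isClosed_Icc isClosed_singleton)
      Set.inter_subset_left
  obtain ⟨d, hd, hmin⟩ := hK.exists_isLeast ⟨L * c, ⟨hge, le_rfl⟩, hLc⟩
  refine ⟨d, by linarith [hd.1.1], hd.2, fun x hx hx0 => ?_⟩
  by_cases hxd : x < c + δ
  · exact hi x (by rw [abs_of_pos (by linarith [hx.1])]; linarith) (by linarith [hx.1]) hx0
  · push Not at hxd
    have := hmin ⟨⟨hxd, hx.2.le.trans hd.1.2⟩, hx0⟩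
    linarith [hx.2]

theorem prev (h : OscFS F0 F1 F2 L) {c : ℝ} (hc : 0 < c) (h0 : F0 c = 0) :
    ∃ d, 0 < d ∧ d < c ∧ F0 d = 0 ∧ ∀ x ∈ Set.Ioo d c, F0 x ≠ 0 := by
  have hL := h.hL
  obtain ⟨δ, hδ, hi⟩ := h.isol hc h0
  have hpos : 0 < c / L := by positivity
  have hLc : F0 (c / L) = 0 := by
    have := h.s0 (c / L) hpos
    rw [mul_div_cancel₀ _ (by positivity), h0] at this
    have h3 : L ^ 3 ≠ 0 := by positivity
    rcases mul_eq_zero.mp this.symm with h4 | h4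
    · exact absurd h4 h3
    · exact h4
  have hcL : c / L < c := div_lt_self hc hL
  have hge : c / L ≤ c - δ := by
    by_contra hlt
    push Not at hlt
    exact hi (c / L) (by rw [abs_of_neg (by linarith)]; linarith) (by linarith) hLc
  have hK : IsCompact (Set.Icc (c / L) (c - δ) ∩ F0 ⁻¹' {0}) :=
    isCompact_Icc.of_isClosed_subset
      ((h.contOn hpos).preimage_isClosed_of_isClosed isClosed_Icc isClosed_singleton)
      Set.inter_subset_left
  obtain ⟨d, hd, hmax⟩ := hK.exists_isGreatest ⟨c / L, ⟨le_rfl, hge⟩, hLc⟩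
  refine ⟨d, by linarith [hd.1.1], by linarith [hd.1.2], hd.2, fun x hx hx0 => ?_⟩
  by_cases hxd : c - δ < x
  · exact hi x (by rw [abs_of_neg (by linarith [hx.2])]; linarith) (by linarith [hx.2]) hx0
  · push Not at hxd
    have := hmax ⟨⟨hd.1.1.trans hx.1.le, hxd⟩, hx0⟩
    linarith [hx.1]

theorem const_sign (h : OscFS F0 F1 F2 L) {c d : ℝ} (hc : 0 < c) (hcd : c < d)
    (hn : ∀ x ∈ Set.Ioo c d, F0 x ≠ 0) :
    (∀ x ∈ Set.Ioo c d, 0 < F0 x) ∨ (∀ x ∈ Set.Ioo c d, F0 x < 0) := by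
  by_contra hcon
  push Not at hcon
  obtain ⟨⟨x, hx, hx0⟩, ⟨y, hy, hy0⟩⟩ := hcon
  have hco : ContinuousOn F0 (Set.Ioo c d) :=
    fun z hz => (h.cont0 (hc.trans hz.1)).continuousWithinAt
  have := (isPreconnected_Ioo (a := c) (b := d)).intermediate_value hx hy hco
  obtain ⟨z, hz, hz0⟩ := this ⟨hx0, hy0⟩
  exact hn z hz hz0

/-- Integration along an arc. -/
theorem eq_of_deriv {f g f' : ℝ → ℝ} {c d : ℝ}
    (hf : ContinuousOn f (Set.Icc c d)) (hg : ContinuousOn g (Set.Icc c d))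
    (hf' : ∀ x ∈ Set.Ioo c d, HasDerivAt f (f' x) x)
    (hg' : ∀ x ∈ Set.Ioo c d, HasDerivAt g (f' x) x) (h0 : f c = g c) :
    ∀ x ∈ Set.Icc c d, f x = g x := by
  intro x hx
  rcases hx.1.eq_or_lt with heq | hlt
  · rw [← heq, h0]
  have hsub : ContinuousOn (fun y => f y - g y) (Set.Icc c x) :=
    (hf.sub hg).mono (Set.Icc_subset_Icc le_rfl hx.2)
  obtain ⟨z, hz, hz2⟩ := exists_hasDerivAt_eq_slope (fun y => f y - g y) (fun y => f' y - f' y)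
    hlt hsub (fun z hz => (hf' z ⟨hz.1, hz.2.trans_le hx.2⟩).fun_sub
      (hg' z ⟨hz.1, hz.2.trans_le hx.2⟩))
  rw [sub_self, eq_comm, div_eq_zero_iff] at hz2
  rcases hz2 with h2 | h2
  · simp only [h0] at h2; linarith
  · linarith

theorem arc (h : OscFS F0 F1 F2 L) {c d : ℝ} (hc : 0 < c) (hp : ∀ x ∈ Set.Ioo c d, 0 < F0 x) :
    (∀ x ∈ Set.Icc c d, F2 x = F2 c - (x - c)) ∧
    (∀ x ∈ Set.Icc c d, F1 x = F1 c + F2 c * (x - c) - (x - c) ^ 2 / 2) ∧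
    (∀ x ∈ Set.Icc c d, F0 x = F0 c + F1 c * (x - c) + F2 c * (x - c) ^ 2 / 2
      - (x - c) ^ 3 / 6) := by
  have hpos : ∀ x ∈ Set.Icc c d, 0 < x := fun x hx => lt_of_lt_of_le hc hx.1
  have hpos' : ∀ x ∈ Set.Ioo c d, 0 < x := fun x hx => hc.trans hx.1
  have hid : ∀ x : ℝ, HasDerivAt (fun x : ℝ => x - c) 1 x :=
    fun x => (hasDerivAt_id' x).sub_const c
  have A2 : ∀ x ∈ Set.Icc c d, F2 x = F2 c - (x - c) := by
    apply eq_of_deriv (f' := fun _ => -1)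
    · exact fun x hx => (h.c2 x (hpos x hx)).continuousWithinAt
    · fun_prop
    · exact fun x hx => h.dp x (hpos' x hx) (hp x hx)
    · intro x hx
      exact (hid x).const_sub (F2 c)
    · simp
  have A1 : ∀ x ∈ Set.Icc c d, F1 x = F1 c + F2 c * (x - c) - (x - c) ^ 2 / 2 := by
    apply eq_of_deriv (f' := F2)
    · exact fun x hx => (h.d1 x (hpos x hx)).continuousAt.continuousWithinAt
    · fun_prop
    · exact fun x hx => h.d1 x (hpos' x hx)
    · intro x hx
      rw [A2 x ⟨hx.1.le, hx.2.le⟩]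
      have := (((hid x).const_mul (F2 c)).const_add (F1 c)).fun_sub
        (((hid x).fun_pow 2).div_const 2)
      refine this.congr_deriv ?_
      push_cast; ring
    · simp
  refine ⟨A2, A1, ?_⟩
  apply eq_of_deriv (f' := F1)
  · exact fun x hx => (h.cont0 (hpos x hx)).continuousWithinAt
  · fun_prop
  · exact fun x hx => h.d0 x (hpos' x hx)
  · intro x hx
    rw [A1 x ⟨hx.1.le, hx.2.le⟩]
    have := ((((hid x).const_mul (F1 c)).const_add (F0 c)).fun_add
      ((((hid x).fun_pow 2).const_mul (F2 c)).div_const 2)).fun_sub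
        (((hid x).fun_pow 3).div_const 6)
    refine this.congr_deriv ?_
    push_cast; ring
  · simp

/-- consecutive zeros with positive arc between -/
theorem arc_end (h : OscFS F0 F1 F2 L) {c d : ℝ} (hc : 0 < c) (hcd : c < d)
    (h0 : F0 c = 0) (h1 : F0 d = 0) (hp : ∀ x ∈ Set.Ioo c d, 0 < F0 x) :
    F1 c = (d - c) ^ 2 / 6 - F2 c * (d - c) / 2 ∧
    F1 d = F2 c * (d - c) / 2 - (d - c) ^ 2 / 3 ∧ F2 d = F2 c - (d - c) ∧ 0 < F1 c ∧ F1 d < 0 := by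
  obtain ⟨A2, A1, A0⟩ := h.arc hc hp
  have hd : d ∈ Set.Icc c d := ⟨hcd.le, le_rfl⟩
  have e2 := A2 d hd
  have e1 := A1 d hd
  have e0 := A0 d hd
  have hy : 0 < d - c := by linarith
  set y := d - c with hyd
  rw [h0, h1] at e0
  have ep : F1 c = y ^ 2 / 6 - F2 c * y / 2 := by
    have : y * (F1 c + F2 c * y / 2 - y ^ 2 / 6) = 0 := by linarith
    rcases mul_eq_zero.mp this with h3 | h3 <;> linarith
  have hne := h.simple hc h0
  have hpos : 0 < F1 c := by
    by_contra hcon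
    have hlt : F1 c < 0 := lt_of_le_of_ne (not_lt.mp hcon) hne
    set t := min (y / 2) (-3 * F1 c / y) with ht
    have ht0 : 0 < t := lt_min (by linarith) (div_pos (by linarith) hy)
    have ht1 : t ≤ y / 2 := min_le_left _ _
    have ht2 : t * y ≤ -3 * F1 c := by
      have : t ≤ -3 * F1 c / y := min_le_right _ _
      rwa [le_div_iff₀ hy] at this
    have hq := hp (c + t) ⟨by linarith, by linarith⟩
    rw [A0 (c + t) ⟨by linarith, by linarith⟩, h0] at hq
    have h5 : 0 + F1 c * (c + t - c) + F2 c * (c + t - c) ^ 2 / 2 - (c + t - c) ^ 3 / 6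
      = t * (y - t) * (6 * F1 c + t * y) / (6 * y) := by
      have : F2 c = (y ^ 2 / 3 - 2 * F1 c) / y := by
        rw [eq_div_iff hy.ne']; linarith
      rw [this]; field_simp; ring
    rw [h5] at hq
    have : t * (y - t) * (6 * F1 c + t * y) / (6 * y) ≤ 0 := by
      apply div_nonpos_of_nonpos_of_nonneg _ (by linarith)
      apply mul_nonpos_of_nonneg_of_nonpos
      · exact mul_nonneg ht0.le (by linarith)
      · linarith
    linarith
  refine ⟨ep, by rw [e1, ep]; ring, e2, hpos, ?_⟩
  rw [e1]
  nlinarith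

theorem contract {a b : ℝ} (ha0 : 0 < a) (ha : a < 1 / 3) (hb0 : 0 < b) (hb : b < 1 / 3)
    (hG : (2 - 3 * a) * b ^ 2 = (1 - 3 * b) * (1 - a) ^ 2) :
    |b - (5 - √5) / 10| ≤ 1 / 2 * |a - (5 - √5) / 10| := by
  have hr : √5 ^ 2 = 5 := Real.sq_sqrt (by norm_num)
  have hr1 : 2.236 < √5 := Real.lt_sqrt_of_sq_lt (by norm_num)
  have hr2 : √5 < 2.237 := (Real.sqrt_lt' (by norm_num)).mpr (by norm_num)
  set m := (5 - √5) / 10 with hm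
  have hm2 : 5 * m ^ 2 - 5 * m + 1 = 0 := by rw [hm]; nlinarith
  have hm3 : 0.2763 < m := by rw [hm]; linarith
  have hm4 : m < 0.2764 := by rw [hm]; linarith
  have key : (b - m) * ((2 - 3 * a) * (b + m) + 3 * (1 - a) ^ 2)
      = -(a - m) * (-3 * m ^ 2 + (1 - 3 * m) * (2 - a - m)) := by
    linear_combination hG + (1 : ℝ) * hm2
  have hB : 1 ≤ (2 - 3 * a) * (b + m) + 3 * (1 - a) ^ 2 := by nlinarith
  have hA : |(-3 * m ^ 2 + (1 - 3 * m) * (2 - a - m))| ≤ 1 / 2 := by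
    rw [abs_le]; constructor <;> nlinarith
  have := congrArg abs key
  rw [abs_mul, abs_mul, abs_neg, abs_of_pos (by linarith : 0 < (2 - 3 * a) * (b + m) + 3 * (1 - a) ^ 2)] at this
  nlinarith [abs_nonneg (b - m), abs_nonneg (a - m)]

theorem prev_arc (h : OscFS F0 F1 F2 L) {c d : ℝ} (hc : 0 < c) (hcd : c < d)
    (h0 : F0 c = 0) (h1 : F0 d = 0) (hp : ∀ x ∈ Set.Ioo c d, 0 < F0 x) :
    ∃ b, 0 < b ∧ b < c ∧ F0 b = 0 ∧ (∀ x ∈ Set.Ioo b c, F0 x < 0) := by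
  obtain ⟨b, hb, hbc, hb0, hbn⟩ := h.prev hc h0
  refine ⟨b, hb, hbc, hb0, ?_⟩
  rcases h.const_sign hb hbc hbn with hs | hs
  · have e1 := h.arc_end hb hbc hb0 h0 hs
    have e2 := h.arc_end hc hcd h0 h1 hp
    linarith [e1.2.2.2.2, e2.2.2.2.1]
  · exact hs

/-- bounds on the ratio and the recursion -/
theorem step (h : OscFS F0 F1 F2 L) {b c d : ℝ} (hb : 0 < b) (hbc : b < c) (hcd : c < d)
    (hb0 : F0 b = 0) (h0 : F0 c = 0) (h1 : F0 d = 0) (hn : ∀ x ∈ Set.Ioo b c, F0 x < 0)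
    (hp : ∀ x ∈ Set.Ioo c d, 0 < F0 x) :
    -F2 b / (c - b) < 1 / 3 ∧ 0 < F2 c / (d - c) ∧ F2 c / (d - c) < 1 / 3 ∧
    (2 - 3 * (-F2 b / (c - b))) * (F2 c / (d - c)) ^ 2
      = (1 - 3 * (F2 c / (d - c))) * (1 - (-F2 b / (c - b))) ^ 2 ∧
    (F2 c / (d - c)) * (d - c) = (1 - (-F2 b / (c - b))) * (c - b) := by
  have hc : 0 < c := hb.trans hbc
  obtain ⟨p1, p2, p3, p4, p5⟩ := h.neg.arc_end hb hbc (by simp [hb0]) (by simp [h0])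
    (fun x hx => by have := hn x hx; linarith)
  obtain ⟨q1, q2, q3, q4, q5⟩ := h.arc_end hc hcd h0 h1 hp
  try simp only at p1 p2 p3 p4 p5
  have hy : 0 < c - b := by linarith
  have hy' : 0 < d - c := by linarith
  set y := c - b
  set z := d - c
  have ea : -F2 b = (-F2 b / y) * y := by field_simp
  have eb : F2 c = (F2 c / z) * z := by field_simp
  generalize hA : -F2 b / y = A at *
  generalize hB : F2 c / z = B at *
  have hA3 : A < 1 / 3 := by
    rw [p1, ea] at p4
    have : 0 < y ^ 2 * (1 - 3 * A) := by nlinarith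
    have := pos_of_mul_pos_right this (by positivity)
    linarith
  have hB3 : B < 1 / 3 := by
    rw [q1, eb] at q4
    have : 0 < z ^ 2 * (1 - 3 * B) := by nlinarith
    have := pos_of_mul_pos_right this (by positivity)
    linarith
  have e5 : B * z = (1 - A) * y := by
    rw [← eb]; linarith
  have hB0 : 0 < B := by
    have : 0 < B * z := by rw [e5]; exact mul_pos (by linarith) hy
    exact pos_of_mul_pos_left this hy'.le
  refine ⟨hA3, hB0, hB3, ?_, e5⟩
  have e6 : z ^ 2 / 6 - B * z * z / 2 = y ^ 2 / 3 - A * y * y / 2 := by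
    rw [← eb, ← ea]; linarith
  have e7 : z ^ 2 * (1 - 3 * B) = y ^ 2 * (2 - 3 * A) := by linarith
  have hy2 : y ^ 2 ≠ 0 := by positivity
  apply mul_left_cancel₀ hy2
  calc y ^ 2 * ((2 - 3 * A) * B ^ 2) = (z ^ 2 * (1 - 3 * B)) * B ^ 2 := by rw [e7]; ring
    _ = (1 - 3 * B) * (B * z) ^ 2 := by ring
    _ = _ := by rw [e5]; ring

theorem ratio_aux (n : ℕ) : ∀ {F0 F1 F2 : ℝ → ℝ} {L : ℝ} (_ : OscFS F0 F1 F2 L) {c d : ℝ}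
    (_ : 0 < c) (_ : c < d) (_ : F0 c = 0) (_ : F0 d = 0) (_ : ∀ x ∈ Set.Ioo c d, 0 < F0 x),
    0 < F2 c / (d - c) ∧ |F2 c / (d - c) - (5 - √5) / 10| ≤ (1 / 2) ^ n := by
  have hr1 : 2.236 < √5 := Real.lt_sqrt_of_sq_lt (by norm_num)
  have hr2 : √5 < 2.237 := (Real.sqrt_lt' (by norm_num)).mpr (by norm_num)
  induction n with
  | zero =>
    intro F0 F1 F2 L h c d hc hcd h0 h1 hp
    obtain ⟨b, hb, hbc, hb0, hn⟩ := h.prev_arc hc hcd h0 h1 hp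
    obtain ⟨s1, s2, s3, s4, s5⟩ := h.step hb hbc hcd hb0 h0 h1 hn hp
    refine ⟨s2, ?_⟩
    rw [pow_zero, abs_le]
    constructor <;> linarith
  | succ n ih =>
    intro F0 F1 F2 L h c d hc hcd h0 h1 hp
    obtain ⟨b, hb, hbc, hb0, hn⟩ := h.prev_arc hc hcd h0 h1 hp
    obtain ⟨s1, s2, s3, s4, s5⟩ := h.step hb hbc hcd hb0 h0 h1 hn hp
    obtain ⟨i1, i2⟩ := ih h.neg hb hbc (by simp [hb0]) (by simp [h0])
      (fun x hx => by have := hn x hx; linarith)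
    refine ⟨s2, ?_⟩
    have := contract i1 s1 s2 s3 s4
    rw [pow_succ]
    linarith

theorem ratio (h : OscFS F0 F1 F2 L) {c d : ℝ} (hc : 0 < c) (hcd : c < d)
    (h0 : F0 c = 0) (h1 : F0 d = 0) (hp : ∀ x ∈ Set.Ioo c d, 0 < F0 x) :
    F2 c / (d - c) = (5 - √5) / 10 := by
  have h2 : |F2 c / (d - c) - (5 - √5) / 10| ≤ 0 :=
    ge_of_tendsto' (tendsto_pow_atTop_nhds_zero_of_lt_one (by norm_num : (0 : ℝ) ≤ 1 / 2)
      (by norm_num)) (fun n => (ratio_aux n h hc hcd h0 h1 hp).2)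
  have := abs_nonpos_iff.mp h2
  linarith

theorem center_aux (n : ℕ) : ∀ {F0 F1 F2 : ℝ → ℝ} {L : ℝ} (_ : OscFS F0 F1 F2 L) {c d : ℝ}
    (_ : 0 < c) (_ : c < d) (_ : F0 c = 0) (_ : F0 d = 0) (_ : ∀ x ∈ Set.Ioo c d, 0 < F0 x),
    ∃ z, 0 < z ∧ F0 z = 0 ∧ z = (c - (d - c) * ((√5 - 1) / 2))
      + (d - c) * ((3 - √5) / 2) ^ n * ((√5 - 1) / 2) := by
  have hr : √5 ^ 2 = 5 := Real.sq_sqrt (by norm_num)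
  have hr1 : 2.236 < √5 := Real.lt_sqrt_of_sq_lt (by norm_num)
  have hr2 : √5 < 2.237 := (Real.sqrt_lt' (by norm_num)).mpr (by norm_num)
  induction n with
  | zero =>
    intro F0 F1 F2 L h c d hc hcd h0 h1 hp
    exact ⟨c, hc, h0, by ring⟩
  | succ n ih =>
    intro F0 F1 F2 L h c d hc hcd h0 h1 hp
    obtain ⟨b, hb, hbc, hb0, hn⟩ := h.prev_arc hc hcd h0 h1 hp
    obtain ⟨s1, s2, s3, s4, s5⟩ := h.step hb hbc hcd hb0 h0 h1 hn hp
    have hn' : ∀ x ∈ Set.Ioo b c, 0 < (fun x => -F0 x) x :=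
      fun x hx => by have := hn x hx; linarith
    obtain ⟨z, hz, hz0, hz1⟩ := ih h.neg hb hbc (by simp [hb0]) (by simp [h0]) hn'
    have r1 := h.ratio hc hcd h0 h1 hp
    have r2 := h.neg.ratio hb hbc (by simp [hb0]) (by simp [h0]) hn'
    try simp only at r2
    rw [r1, r2] at s5
    refine ⟨z, hz, by simpa using hz0, ?_⟩
    have e : c - b = (d - c) * ((3 - √5) / 2) := by
      have h6 : (5 + √5) * ((c - b) - (d - c) * ((3 - √5) / 2)) = 0 := by
        linear_combination -10 * s5 + (d - c) / 2 * hr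
      rcases mul_eq_zero.mp h6 with h7 | h7 <;> linarith
    rw [hz1, pow_succ]
    have e2 : b = c - (d - c) * ((3 - √5) / 2) := by linarith
    rw [e, e2]
    linear_combination ((d - c) / 4) * hr

theorem center (h : OscFS F0 F1 F2 L) {c d : ℝ} (hc : 0 < c) (hcd : c < d)
    (h0 : F0 c = 0) (h1 : F0 d = 0) (hp : ∀ x ∈ Set.Ioo c d, 0 < F0 x) :
    c = (d - c) * ((√5 - 1) / 2) := by
  have hr1 : 2.236 < √5 := Real.lt_sqrt_of_sq_lt (by norm_num)
  have hr2 : √5 < 2.237 := (Real.sqrt_lt' (by norm_num)).mpr (by norm_num)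
  choose z hz hz0 hz1 using fun n => center_aux n h hc hcd h0 h1 hp
  set w := c - (d - c) * ((√5 - 1) / 2) with hw
  have ht : Filter.Tendsto z Filter.atTop (nhds w) := by
    have h2 := tendsto_pow_atTop_nhds_zero_of_lt_one (r := (3 - √5) / 2) (by linarith) (by linarith)
    have h3 := ((h2.const_mul (d - c)).mul_const ((√5 - 1) / 2)).const_add w
    simp only [mul_zero, zero_mul, add_zero] at h3
    exact h3.congr (fun n => (hz1 n).symm)
  have hw0 : 0 ≤ w := ge_of_tendsto' ht (fun n => (hz n).le)
  rcases hw0.eq_or_lt with he | hl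
  · linarith
  exfalso
  have hFw : F0 w = 0 := by
    have h5 := (h.cont0 hl).tendsto.comp ht
    have h6 : Filter.Tendsto (F0 ∘ z) Filter.atTop (nhds 0) :=
      tendsto_const_nhds.congr (fun n => (hz0 n).symm)
    exact tendsto_nhds_unique h5 h6
  obtain ⟨δ, hδ, hi⟩ := h.isol hl hFw
  obtain ⟨n, hn⟩ := ((Metric.tendsto_nhds.mp ht) δ hδ).exists
  refine hi (z n) (by rwa [Real.dist_eq] at hn) ?_ (hz0 n)
  rw [hz1 n]
  have : 0 < (d - c) * ((3 - √5) / 2) ^ n * ((√5 - 1) / 2) :=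
    mul_pos (mul_pos (by linarith) (pow_pos (by linarith) n)) (by linarith)
  linarith

/-- Final description of the arcs. -/
theorem final (h : OscFS F0 F1 F2 L) {c : ℝ} (hc : 0 < c) (h0 : F0 c = 0) (hF1 : 0 < F1 c) :
    F0 ((3 + √5) / 2 * c) = 0 ∧ F1 ((3 + √5) / 2 * c) < 0 ∧
    ∀ x ∈ Set.Icc c ((3 + √5) / 2 * c), F0 x = √5 / 30 * c ^ 2 * (x - c)
      + √5 / 10 * c * (x - c) ^ 2 - (x - c) ^ 3 / 6 := by
  have hr : √5 ^ 2 = 5 := Real.sq_sqrt (by norm_num)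
  obtain ⟨d, hcd, h1, hn⟩ := h.next hc h0
  have hp : ∀ x ∈ Set.Ioo c d, 0 < F0 x := by
    rcases h.const_sign hc hcd hn with hs | hs
    · exact hs
    · have := (h.neg.arc_end hc hcd (by simp [h0]) (by simp [h1])
        (fun x hx => by have := hs x hx; linarith)).2.2.2.1
      try simp only at this
      linarith
  have hcen := h.center hc hcd h0 h1 hp
  have hrat := h.ratio hc hcd h0 h1 hp
  rw [div_eq_iff (by linarith)] at hrat
  obtain ⟨q1, q2, q3, q4, q5⟩ := h.arc_end hc hcd h0 h1 hp
  have hy : d - c = (1 + √5) / 2 * c := by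
    linear_combination (-(1 + √5) / 2) * hcen - (d - c) / 4 * hr
  have hd : d = (3 + √5) / 2 * c := by linarith
  have hF2 : F2 c = √5 / 5 * c := by
    rw [hrat, hy]; linear_combination (-c / 20) * hr
  have hF1c : F1 c = √5 / 30 * c ^ 2 := by
    rw [q1, hF2, hy]; linear_combination (-c ^ 2 / 120) * hr
  rw [← hd]
  refine ⟨h1, q5, fun x hx => ?_⟩
  rw [(h.arc hc hp).2.2 x hx, h0, hF1c, hF2]
  ring

end OscFS

theorem osc_d3 {ψ : ℝ → ℝ} (h : IsOscSolOne ψ) {s : ℝ} (hs : ψ s ≠ 0) :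
    HasDerivAt (deriv (deriv ψ))
      (-(6 * deriv (deriv ψ) s + 11 * deriv ψ s + 6 * ψ s + Real.sign (ψ s))) s := by
  obtain ⟨hC, hI, hE⟩ := h
  have c0 : Continuous ψ := hC.continuous
  have hC1 : ContDiff ℝ 1 (deriv ψ) := by
    have := (contDiff_succ_iff_deriv (n := 1) (f := ψ)).mp (by rw [one_add_one_eq_two]; exact hC)
    exact this.2.2
  have c1 : Continuous (deriv ψ) := hC1.continuous
  have c2 : Continuous (deriv (deriv ψ)) := hC1.continuous_deriv le_rfl
  have hsg : ∃ δ > 0, ∀ t, |t - s| < δ → ψ t ≠ 0 ∧ Real.sign (ψ t) = Real.sign (ψ s) := by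
    rcases lt_or_gt_of_ne hs with h0 | h0
    · have := c0.continuousAt.eventually_lt_const h0
      rw [Metric.eventually_nhds_iff] at this
      obtain ⟨δ, hδ, h1⟩ := this
      refine ⟨δ, hδ, fun t ht => ?_⟩
      have h2 := h1 (by rwa [Real.dist_eq] : dist t s < δ)
      exact ⟨h2.ne, by rw [Real.sign_of_neg h2, Real.sign_of_neg h0]⟩
    · have := c0.continuousAt.eventually_const_lt h0
      rw [Metric.eventually_nhds_iff] at this
      obtain ⟨δ, hδ, h1⟩ := this
      refine ⟨δ, hδ, fun t ht => ?_⟩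
      have h2 := h1 (by rwa [Real.dist_eq] : dist t s < δ)
      exact ⟨h2.ne', by rw [Real.sign_of_pos h2, Real.sign_of_pos h0]⟩
  obtain ⟨δ, hδ, hsg⟩ := hsg
  set g : ℝ → ℝ := fun t =>
    -(6 * deriv (deriv ψ) t + 11 * deriv ψ t + 6 * ψ t + Real.sign (ψ s)) with hg
  have cg : Continuous g := by
    rw [hg]; fun_prop
  have h1 : HasDerivAt (fun t => deriv (deriv ψ) s + ∫ u in s..t, g u) (g s) s :=
    (cg.integral_hasStrictDerivAt s s).hasDerivAt.const_add _
  refine h1.congr_of_eventuallyEq ?_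
  rw [Filter.EventuallyEq, Metric.eventually_nhds_iff]
  refine ⟨δ, hδ, fun t ht => ?_⟩
  rw [Real.dist_eq] at ht
  have h2 := hI s t
  have h3 : ∫ u in s..t, deriv (deriv (deriv ψ)) u = ∫ u in s..t, g u := by
    apply intervalIntegral.integral_congr
    intro u hu
    have hu2 : |u - s| < δ := lt_of_le_of_lt (Set.abs_sub_left_of_mem_uIcc hu) ht
    obtain ⟨h4, h5⟩ := hsg u hu2
    have := hE u h4
    rw [h5] at this
    simp only [hg]
    linarith
  rw [← h3]
  linarith

theorem osc_FS {ψ : ℝ → ℝ} {T : ℝ} (hT : 0 < T) (h : IsOscSolOne ψ) (hper : Function.Periodic ψ T)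
    (hnz : ∃ s, ψ s ≠ 0) :
    OscFS (fun x => x ^ 3 * ψ (Real.log x))
      (fun x => x ^ 2 * (3 * ψ (Real.log x) + deriv ψ (Real.log x)))
      (fun x => x * (6 * ψ (Real.log x) + 5 * deriv ψ (Real.log x) + deriv (deriv ψ) (Real.log x)))
      (Real.exp T) := by
  have hd3 := fun s => osc_d3 h (s := s)
  obtain ⟨hC, hI, hE⟩ := h
  have hC1 : ContDiff ℝ 1 (deriv ψ) := by
    have := (contDiff_succ_iff_deriv (n := 1) (f := ψ)).mp (by rw [one_add_one_eq_two]; exact hC)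
    exact this.2.2
  have c2 : Continuous (deriv (deriv ψ)) := hC1.continuous_deriv le_rfl
  have D0 : ∀ s, HasDerivAt ψ (deriv ψ s) s :=
    fun s => (hC.differentiable (by norm_num) s).hasDerivAt
  have D1 : ∀ s, HasDerivAt (deriv ψ) (deriv (deriv ψ) s) s :=
    fun s => (hC1.differentiable (by norm_num) s).hasDerivAt
  have c0 : Continuous ψ := hC.continuous
  have c1 : Continuous (deriv ψ) := hC1.continuous
  have L0 : ∀ x, 0 < x → HasDerivAt (fun x => ψ (Real.log x)) (deriv ψ (Real.log x) * x⁻¹) x :=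
    fun x hx => (D0 _).comp x (Real.hasDerivAt_log hx.ne')
  have L1 : ∀ x, 0 < x → HasDerivAt (fun x => deriv ψ (Real.log x))
      (deriv (deriv ψ) (Real.log x) * x⁻¹) x :=
    fun x hx => (D1 _).comp x (Real.hasDerivAt_log hx.ne')
  have L2 : ∀ x, 0 < x → ψ (Real.log x) ≠ 0 → HasDerivAt
      (fun x => x * (6 * ψ (Real.log x) + 5 * deriv ψ (Real.log x) + deriv (deriv ψ) (Real.log x)))
      (-Real.sign (ψ (Real.log x))) x := by
    intro x hx hne
    have l2 : HasDerivAt (fun x => deriv (deriv ψ) (Real.log x)) _ x :=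
      (hd3 _ hne).comp x (Real.hasDerivAt_log hx.ne')
    have := (hasDerivAt_id' x).fun_mul ((((L0 x hx).const_mul 6).fun_add
      ((L1 x hx).const_mul 5)).fun_add l2)
    refine this.congr_deriv ?_
    field_simp
    ring
  have p1 : Function.Periodic (deriv ψ) T := by
    intro s
    have := congrFun (congrArg deriv (funext hper : (fun x => ψ (x + T)) = ψ)) s
    rwa [deriv_comp_add_const] at this
  have p2 : Function.Periodic (deriv (deriv ψ)) T := by
    intro s
    have := congrFun (congrArg deriv (funext p1 : (fun x => deriv ψ (x + T)) = deriv ψ)) s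
    rwa [deriv_comp_add_const] at this
  have hlog : ∀ x, 0 < x → Real.log (Real.exp T * x) = Real.log x + T := by
    intro x hx
    rw [Real.log_mul (Real.exp_pos T).ne' hx.ne', Real.log_exp, add_comm]
  refine ⟨by simpa using hT, ?_, ?_, ?_, ?_, ?_, ?_, ?_, ?_, ?_⟩
  · intro x hx
    have := ((hasDerivAt_id' x).fun_pow 3).fun_mul (L0 x hx)
    refine this.congr_deriv ?_
    field_simp
    push_cast
    ring
  · intro x hx
    have := ((hasDerivAt_id' x).fun_pow 2).fun_mul (((L0 x hx).const_mul 3).fun_add (L1 x hx))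
    refine this.congr_deriv ?_
    field_simp
    push_cast
    ring
  · intro x hx
    have hl := Real.continuousAt_log hx.ne'
    have a0 : ContinuousAt (fun x => ψ (Real.log x)) x := c0.continuousAt.comp hl
    have a1 : ContinuousAt (fun x => deriv ψ (Real.log x)) x := c1.continuousAt.comp hl
    have a2 : ContinuousAt (fun x => deriv (deriv ψ) (Real.log x)) x := c2.continuousAt.comp hl
    fun_prop
  · intro x hx hp
    have : 0 < ψ (Real.log x) := pos_of_mul_pos_right hp (by positivity)
    have h2 := L2 x hx this.ne'
    rwa [Real.sign_of_pos this] at h2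
  · intro x hx hp
    have : ψ (Real.log x) < 0 := by
      by_contra hcon
      push Not at hcon
      have : 0 ≤ x ^ 3 * ψ (Real.log x) := by positivity
      linarith
    have h2 := L2 x hx this.ne
    rwa [Real.sign_of_neg this, neg_neg] at h2
  · intro x hx
    simp only [hlog x hx, hper (Real.log x)]
    ring
  · intro x hx
    simp only [hlog x hx, hper (Real.log x), p1 (Real.log x)]
    ring
  · intro x hx
    simp only [hlog x hx, hper (Real.log x), p1 (Real.log x), p2 (Real.log x)]
    ring
  · obtain ⟨s, hs⟩ := hnz
    refine ⟨Real.exp s, Real.exp_pos s, ?_⟩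
    rw [Real.log_exp]
    exact mul_ne_zero (by positivity) hs

noncomputable def oscTau : ℝ := Real.log ((3 + √5) / 2)

noncomputable def oscU (a b c d : ℝ) (s : ℝ) : ℝ :=
  a + b * Real.exp (-s) + c * Real.exp (-s) ^ 2 + d * Real.exp (-s) ^ 3

noncomputable def oscExt (u : ℝ → ℝ) (s : ℝ) : ℝ :=
  (-1 : ℝ) ^ ⌊s / oscTau⌋ * u (s - ⌊s / oscTau⌋ * oscTau)

noncomputable def oscU0 : ℝ → ℝ :=
  oscU (-1 / 6) (1 / 2 + √5 / 10) (-(1 / 2 + √5 / 6)) (1 / 6 + √5 / 15)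
noncomputable def oscU1 : ℝ → ℝ :=
  oscU 0 (-(1 / 2 + √5 / 10)) (2 * (1 / 2 + √5 / 6)) (-3 * (1 / 6 + √5 / 15))
noncomputable def oscU2 : ℝ → ℝ :=
  oscU 0 (1 / 2 + √5 / 10) (-4 * (1 / 2 + √5 / 6)) (9 * (1 / 6 + √5 / 15))
noncomputable def oscU3 : ℝ → ℝ :=
  oscU 0 (-(1 / 2 + √5 / 10)) (8 * (1 / 2 + √5 / 6)) (-27 * (1 / 6 + √5 / 15))

theorem osc_r : √5 ^ 2 = 5 := Real.sq_sqrt (by norm_num)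
theorem osc_r1 : 2.236 < √5 := Real.lt_sqrt_of_sq_lt (by norm_num)
theorem osc_r2 : √5 < 2.237 := (Real.sqrt_lt' (by norm_num)).mpr (by norm_num)

theorem oscTau_pos : 0 < oscTau := Real.log_pos (by linarith [osc_r1])

theorem exp_oscTau : Real.exp oscTau = (3 + √5) / 2 := Real.exp_log (by linarith [osc_r1])

theorem exp_neg_oscTau : Real.exp (-oscTau) = (3 - √5) / 2 := by
  rw [Real.exp_neg, exp_oscTau]
  apply inv_eq_of_mul_eq_one_right
  linear_combination (-1 / 4) * osc_r

theorem oscU_deriv (a b c d s : ℝ) :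
    HasDerivAt (oscU a b c d) (oscU 0 (-b) (-2 * c) (-3 * d) s) s := by
  have he : HasDerivAt (fun s : ℝ => Real.exp (-s)) (Real.exp (-s) * -1) s :=
    (hasDerivAt_neg s).exp
  have := (((he.const_mul b).const_add a).fun_add ((he.fun_pow 2).const_mul c)).fun_add
    ((he.fun_pow 3).const_mul d)
  refine this.congr_deriv ?_
  simp only [oscU]
  push_cast
  ring

theorem oscU0_deriv (s : ℝ) : HasDerivAt oscU0 (oscU1 s) s := by
  refine (oscU_deriv _ _ _ _ s).congr_deriv ?_
  simp only [oscU1, oscU]; ring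
theorem oscU1_deriv (s : ℝ) : HasDerivAt oscU1 (oscU2 s) s := by
  refine (oscU_deriv _ _ _ _ s).congr_deriv ?_
  simp only [oscU2, oscU]; ring
theorem oscU2_deriv (s : ℝ) : HasDerivAt oscU2 (oscU3 s) s := by
  refine (oscU_deriv _ _ _ _ s).congr_deriv ?_
  simp only [oscU3, oscU]; ring

theorem oscU_ode (s : ℝ) : oscU3 s + 6 * oscU2 s + 11 * oscU1 s + 6 * oscU0 s + 1 = 0 := by
  simp only [oscU0, oscU1, oscU2, oscU3, oscU]; ring

theorem osc_cube : √5 ^ 3 = 5 * √5 := by rw [pow_succ, osc_r]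
theorem osc_four : √5 ^ 4 = 25 := by
  calc √5 ^ 4 = (√5 ^ 2) ^ 2 := by ring
    _ = 25 := by rw [osc_r]; norm_num

theorem oscU0_zero : oscU0 0 = 0 := by
  simp only [oscU0, oscU, neg_zero, Real.exp_zero]; ring

theorem oscU0_tau : oscU0 oscTau = -oscU0 0 := by
  simp only [oscU0, oscU, exp_neg_oscTau, neg_zero, Real.exp_zero]
  ring_nf
  simp only [osc_r, osc_cube, osc_four]
  ring
theorem oscU1_tau : oscU1 oscTau = -oscU1 0 := by
  simp only [oscU1, oscU, exp_neg_oscTau, neg_zero, Real.exp_zero]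
  ring_nf
  simp only [osc_r, osc_cube, osc_four]
  ring
theorem oscU2_tau : oscU2 oscTau = -oscU2 0 := by
  simp only [oscU2, oscU, exp_neg_oscTau, neg_zero, Real.exp_zero]
  ring_nf
  simp only [osc_r, osc_cube, osc_four]
  ring

/-- the cubic polynomial form -/
theorem oscU0_cubic (s : ℝ) : Real.exp s ^ 3 * oscU0 s = √5 / 30 * (Real.exp s - 1)
    + √5 / 10 * (Real.exp s - 1) ^ 2 - (Real.exp s - 1) ^ 3 / 6 := by
  have h : Real.exp (-s) = (Real.exp s)⁻¹ := Real.exp_neg s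
  have hp : Real.exp s ≠ 0 := (Real.exp_pos s).ne'
  simp only [oscU0, oscU, h]
  field_simp
  ring

theorem oscU0_pos {s : ℝ} (h0 : 0 < s) (h1 : s < oscTau) : 0 < oscU0 s := by
  have hc := oscU0_cubic s
  have e0 : 1 < Real.exp s := by simpa using h0
  have e1 : Real.exp s < (3 + √5) / 2 := by
    rw [← exp_oscTau]; exact Real.exp_lt_exp.mpr h1
  set t := Real.exp s - 1 with ht
  have : √5 / 30 * t + √5 / 10 * t ^ 2 - t ^ 3 / 6
      = t * ((1 + √5) / 2 - t) * ((5 - √5) / 60 + t / 6) := by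
    linear_combination (t / 120 + t ^ 2 * 0) * osc_r
  rw [this] at hc
  have r1 := osc_r1
  have r2 := osc_r2
  have hpos : 0 < Real.exp s ^ 3 * oscU0 s := by
    rw [hc]
    exact mul_pos (mul_pos (by linarith) (by linarith)) (by linarith)
  exact pos_of_mul_pos_right hpos (by positivity)

theorem osc_floor_Ico {n : ℤ} {s : ℝ} (h0 : n * oscTau ≤ s) (h1 : s < (n + 1) * oscTau) :
    ⌊s / oscTau⌋ = n := by
  rw [Int.floor_eq_iff, le_div_iff₀ oscTau_pos, div_lt_iff₀ oscTau_pos]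
  exact ⟨h0, h1⟩

theorem oscExt_Icc {u : ℝ → ℝ} (hu : u oscTau = -u 0) {n : ℤ} {s : ℝ} (h0 : n * oscTau ≤ s)
    (h1 : s ≤ (n + 1) * oscTau) : oscExt u s = (-1 : ℝ) ^ n * u (s - n * oscTau) := by
  rcases h1.lt_or_eq with h | h
  · rw [oscExt, osc_floor_Ico h0 h]
  · have : ⌊s / oscTau⌋ = n + 1 := by
      apply osc_floor_Ico
      · push_cast; linarith
      · push_cast; linarith [oscTau_pos]
    rw [oscExt, this, h]
    push_cast
    rw [sub_self, show ((n : ℝ) + 1) * oscTau - n * oscTau = oscTau by ring, hu,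
      zpow_add_one₀ (by norm_num)]
    ring

theorem osc_mem (s : ℝ) : (⌊s / oscTau⌋ : ℝ) * oscTau ≤ s ∧ s < (⌊s / oscTau⌋ + 1) * oscTau := by
  rw [← le_div_iff₀ oscTau_pos, ← div_lt_iff₀ oscTau_pos]
  exact ⟨Int.floor_le _, Int.lt_floor_add_one _⟩

theorem oscExt_deriv_Ioo {u v : ℝ → ℝ} (hd : ∀ s, HasDerivAt u (v s) s) {n : ℤ} {s : ℝ}
    (h0 : n * oscTau < s) (h1 : s < (n + 1) * oscTau) :
    HasDerivAt (oscExt u) ((-1 : ℝ) ^ n * v (s - n * oscTau)) s := by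
  have h2 : HasDerivAt (fun t => (-1 : ℝ) ^ n * u (t - n * oscTau))
      ((-1 : ℝ) ^ n * v (s - n * oscTau)) s :=
    ((hd _).comp_sub_const s (n * oscTau)).const_mul _
  refine h2.congr_of_eventuallyEq ?_
  filter_upwards [Ioo_mem_nhds h0 h1] with t ht
  rw [oscExt, osc_floor_Ico ht.1.le ht.2]

theorem osc_nhds_left (n : ℤ) :
    Set.Icc (((n - 1 : ℤ) : ℝ) * oscTau) (((n - 1 : ℤ) + 1 : ℝ) * oscTau)
      ∈ nhdsWithin (n * oscTau) (Set.Iic (n * oscTau)) := by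
  have := Icc_mem_nhdsLE (a := (n - 1 : ℝ) * oscTau) (b := n * oscTau)
    (by linarith [oscTau_pos])
  push_cast
  simpa using this

theorem osc_nhds_right (n : ℤ) :
    Set.Icc ((n : ℝ) * oscTau) ((n + 1 : ℝ) * oscTau)
      ∈ nhdsWithin (n * oscTau) (Set.Ici (n * oscTau)) :=
  Icc_mem_nhdsGE (by linarith [oscTau_pos])

theorem oscExt_deriv {u v : ℝ → ℝ} (hd : ∀ s, HasDerivAt u (v s) s) (hu : u oscTau = -u 0)
    (hv : v oscTau = -v 0) (s : ℝ) : HasDerivAt (oscExt u) (oscExt v s) s := by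
  obtain ⟨m0, m1⟩ := osc_mem s
  generalize ⌊s / oscTau⌋ = n at m0 m1
  rcases m0.lt_or_eq with h | h
  · rw [oscExt_Icc hv m0 m1.le]
    exact oscExt_deriv_Ioo hd h m1
  · subst h
    have side : ∀ (k : ℤ), (k : ℝ) * oscTau ≤ n * oscTau → (n : ℝ) * oscTau ≤ (k + 1) * oscTau →
        HasDerivWithinAt (oscExt u) (oscExt v (n * oscTau))
          (Set.Icc ((k : ℝ) * oscTau) ((k + 1 : ℝ) * oscTau)) (n * oscTau) := by
      intro k k0 k1
      have h2 : HasDerivAt (fun t => (-1 : ℝ) ^ k * u (t - k * oscTau))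
          ((-1 : ℝ) ^ k * v (n * oscTau - k * oscTau)) (n * oscTau) :=
        ((hd _).comp_sub_const _ (k * oscTau)).const_mul _
      rw [oscExt_Icc hv k0 k1]
      exact h2.hasDerivWithinAt.congr (fun t ht => oscExt_Icc hu ht.1 ht.2) (oscExt_Icc hu k0 k1)
    have hr := (side n le_rfl m1.le).mono_of_mem_nhdsWithin (osc_nhds_right n)
    have hl := (side (n - 1) (by push_cast; linarith [oscTau_pos])
      (by push_cast; linarith)).mono_of_mem_nhdsWithin (osc_nhds_left n)
    have := hl.union hr
    rw [Set.Iic_union_Ici] at this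
    exact hasDerivWithinAt_univ.mp this

theorem oscExt_cont {u : ℝ → ℝ} (hc : Continuous u) (hu : u oscTau = -u 0) :
    Continuous (oscExt u) := by
  rw [continuous_iff_continuousAt]
  intro s
  obtain ⟨m0, m1⟩ := osc_mem s
  generalize ⌊s / oscTau⌋ = n at m0 m1
  rcases m0.lt_or_eq with h | h
  · have h2 : ContinuousAt (fun t => (-1 : ℝ) ^ n * u (t - n * oscTau)) s := by fun_prop
    refine h2.congr ?_
    filter_upwards [Ioo_mem_nhds h m1] with t ht
    rw [oscExt_Icc hu ht.1.le ht.2.le]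
  · subst h
    have side : ∀ (k : ℤ), (k : ℝ) * oscTau ≤ n * oscTau → (n : ℝ) * oscTau ≤ (k + 1) * oscTau →
        ContinuousWithinAt (oscExt u)
          (Set.Icc ((k : ℝ) * oscTau) ((k + 1 : ℝ) * oscTau)) (n * oscTau) := by
      intro k k0 k1
      have h2 : ContinuousAt (fun t => (-1 : ℝ) ^ k * u (t - k * oscTau)) (n * oscTau) := by
        fun_prop
      exact h2.continuousWithinAt.congr (fun t ht => oscExt_Icc hu ht.1 ht.2) (oscExt_Icc hu k0 k1)
    have hr := (side n le_rfl m1.le).mono_of_mem_nhdsWithin (osc_nhds_right n)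
    have hl := (side (n - 1) (by push_cast; linarith [oscTau_pos])
      (by push_cast; linarith)).mono_of_mem_nhdsWithin (osc_nhds_left n)
    exact continuousAt_iff_continuous_left_right.mpr ⟨hl, hr⟩

theorem oscExt_zero (n : ℤ) : oscExt oscU0 (n * oscTau) = 0 := by
  rw [oscExt_Icc (n := n) oscU0_tau le_rfl (by linarith [oscTau_pos]), sub_self, oscU0_zero,
    mul_zero]

theorem oscExt_ne {s : ℝ} (h : oscExt oscU0 s ≠ 0) :
    ∃ n : ℤ, n * oscTau < s ∧ s < (n + 1) * oscTau := by
  obtain ⟨m0, m1⟩ := osc_mem s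
  refine ⟨_, lt_of_le_of_ne m0 (fun h2 => h ?_), m1⟩
  rw [← h2, oscExt_zero]

theorem oscExt_per (u : ℝ → ℝ) (s : ℝ) : oscExt u (s + 2 * oscTau) = oscExt u s := by
  have : ⌊(s + 2 * oscTau) / oscTau⌋ = ⌊s / oscTau⌋ + 2 := by
    rw [add_div, mul_div_cancel_right₀ _ oscTau_pos.ne']
    exact_mod_cast Int.floor_add_ofNat (s / oscTau) 2
  rw [oscExt, oscExt, this, zpow_add₀ (by norm_num)]
  push_cast
  norm_num
  left
  congr 1
  ring

theorem oscExt_sol : IsOscSolOne (oscExt oscU0) := by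
  have D0 := oscExt_deriv oscU0_deriv oscU0_tau oscU1_tau
  have D1 := oscExt_deriv oscU1_deriv oscU1_tau oscU2_tau
  have cU2 : Continuous oscU2 :=
    continuous_iff_continuousAt.mpr fun s => (oscU2_deriv s).continuousAt
  have c2 : Continuous (oscExt oscU2) := oscExt_cont cU2 oscU2_tau
  have c0 : Continuous (oscExt oscU0) :=
    continuous_iff_continuousAt.mpr fun s => (D0 s).continuousAt
  have c1 : Continuous (oscExt oscU1) :=
    continuous_iff_continuousAt.mpr fun s => (D1 s).continuousAt
  have e0 : deriv (oscExt oscU0) = oscExt oscU1 := funext fun s => (D0 s).deriv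
  have e1 : deriv (oscExt oscU1) = oscExt oscU2 := funext fun s => (D1 s).deriv
  have key : ∀ (n : ℤ) (s : ℝ), n * oscTau < s → s < (n + 1) * oscTau →
      HasDerivAt (oscExt oscU2) (-(6 * oscExt oscU2 s + 11 * oscExt oscU1 s
        + 6 * oscExt oscU0 s + Real.sign (oscExt oscU0 s))) s := by
    intro n s h0 h1
    refine (oscExt_deriv_Ioo oscU2_deriv h0 h1).congr_deriv ?_
    rw [oscExt_Icc oscU2_tau h0.le h1.le, oscExt_Icc oscU1_tau h0.le h1.le,
      oscExt_Icc oscU0_tau h0.le h1.le]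
    have hp : 0 < oscU0 (s - n * oscTau) := oscU0_pos (by linarith) (by linarith)
    have ho := oscU_ode (s - n * oscTau)
    rcases Int.even_or_odd n with hn | hn
    · rw [hn.neg_one_zpow, one_mul, one_mul, one_mul, one_mul, Real.sign_of_pos hp]
      linarith
    · rw [hn.neg_one_zpow, Real.sign_of_neg (by linarith)]
      linarith
  refine ⟨?_, ?_, ?_⟩
  · have h1 : ContDiff ℝ 1 (oscExt oscU1) := by
      rw [contDiff_one_iff_deriv]
      exact ⟨fun s => (D1 s).differentiableAt, by rw [e1]; exact c2⟩
    have h2 : ContDiff ℝ (1 + 1) (oscExt oscU0) := by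
      rw [contDiff_succ_iff_deriv]
      exact ⟨fun s => (D0 s).differentiableAt, by simp, by rw [e0]; exact h1⟩
    norm_num at h2
    exact h2
  · rw [e0, e1]
    intro a b
    symm
    have hcount : (Set.range fun n : ℤ => (n : ℝ) * oscTau).Countable := Set.countable_range _
    have hoff : ∀ s, s ∉ (Set.range fun n : ℤ => (n : ℝ) * oscTau) →
        HasDerivAt (oscExt oscU2) (-(6 * oscExt oscU2 s + 11 * oscExt oscU1 s
        + 6 * oscExt oscU0 s + Real.sign (oscExt oscU0 s))) s := by
      intro s hs
      obtain ⟨m0, m1⟩ := osc_mem s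
      exact key _ s (lt_of_le_of_ne m0 (fun h2 => hs ⟨_, h2⟩)) m1
    apply MeasureTheory.integral_eq_of_hasDerivAt_off_countable (oscExt oscU2) _ hcount
      c2.continuousOn
    · intro x hx
      have := hoff x hx.2
      rwa [← this.deriv] at this
    · set B : ℝ → ℝ := fun s => |6 * oscExt oscU2 s + 11 * oscExt oscU1 s
        + 6 * oscExt oscU0 s| + 1 with hB
      have cB : Continuous B := by rw [hB]; fun_prop
      refine (cB.intervalIntegrable a b).mono_fun
        (measurable_deriv _).aestronglyMeasurable ?_
      refine MeasureTheory.ae_restrict_of_ae ?_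
      filter_upwards [hcount.ae_notMem volume] with s hs
      rw [(hoff s hs).deriv, hB, Real.norm_eq_abs, Real.norm_eq_abs, abs_neg,
        abs_of_nonneg (by positivity : 0 ≤ |6 * oscExt oscU2 s + 11 * oscExt oscU1 s
        + 6 * oscExt oscU0 s| + 1)]
      refine (abs_add_le _ _).trans ?_
      gcongr
      rcases Real.sign_apply_eq (oscExt oscU0 s) with h | h | h <;> rw [h] <;> norm_num
  · rw [e0, e1]
    intro s hs
    obtain ⟨n, h0, h1⟩ := oscExt_ne hs
    rw [(key n s h0 h1).deriv]
    ring

theorem osc_unique {ψ : ℝ → ℝ} (h : IsOscSolOne ψ) (hper : Function.Periodic ψ (2 * oscTau))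
    (hpos : ∃ s, 0 < ψ s) (hneg : ∃ s, ψ s < 0) :
    ∃ s₀ : ℝ, ∀ s, ψ s = oscExt oscU0 (s + s₀) := by
  have hT : 0 < 2 * oscTau := by linarith [oscTau_pos]
  have hFS := osc_FS hT h hper (hpos.imp fun s hs => hs.ne')
  have c0 : Continuous ψ := h.1.continuous
  have hz : ∃ z, ψ z = 0 := by
    obtain ⟨a, ha⟩ := hpos
    obtain ⟨b, hb⟩ := hneg
    exact mem_range_of_exists_le_of_exists_ge c0 ⟨b, hb.le⟩ ⟨a, ha.le⟩
  have hr1 := osc_r1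
  set F0 : ℝ → ℝ := fun x => x ^ 3 * ψ (Real.log x) with hF0
  set F1 : ℝ → ℝ := fun x => x ^ 2 * (3 * ψ (Real.log x) + deriv ψ (Real.log x)) with hF1
  set F2 : ℝ → ℝ := fun x => x * (6 * ψ (Real.log x) + 5 * deriv ψ (Real.log x)
    + deriv (deriv ψ) (Real.log x)) with hF2
  have hzc : ∃ c, 0 < c ∧ F0 c = 0 ∧ 0 < F1 c := by
    obtain ⟨z, hz⟩ := hz
    have hc := Real.exp_pos z
    have hc0 : F0 (Real.exp z) = 0 := by simp [hF0, hz]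
    rcases lt_or_gt_of_ne (hFS.simple hc hc0) with h1 | h1
    · obtain ⟨f1, f2, f3⟩ := hFS.neg.final hc (by simp [hc0]) (by linarith)
      exact ⟨(3 + √5) / 2 * Real.exp z, by positivity, by linarith, by linarith⟩
    · exact ⟨_, hc, hc0, h1⟩
  obtain ⟨c, hc, hc0, hc1⟩ := hzc
  obtain ⟨f1, f2, f3⟩ := hFS.final hc hc0 hc1
  set cc := (3 + √5) / 2 * c with hcc
  have hccp : 0 < cc := by positivity
  obtain ⟨g1, g2, g3⟩ := hFS.neg.final hccp (by linarith) (by linarith)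
  have hlogcc : Real.log cc = Real.log c + oscTau := by
    rw [hcc, Real.log_mul (by positivity) hc.ne', oscTau, add_comm]
  have conv : ∀ (b t v : ℝ), 0 < b → v * (b * Real.exp t) ^ 3 = √5 / 30 * b ^ 2 * (b * Real.exp t - b)
      + √5 / 10 * b * (b * Real.exp t - b) ^ 2 - (b * Real.exp t - b) ^ 3 / 6 → v = oscU0 t := by
    intro b t v hb hv
    have h1 := oscU0_cubic t
    have h2 : (b * Real.exp t) ^ 3 ≠ 0 := by positivity
    apply mul_right_cancel₀ h2
    rw [hv]
    linear_combination (-b ^ 3) * h1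
  have exp_le : ∀ t, t ≤ oscTau → Real.exp t ≤ (3 + √5) / 2 := by
    intro t ht
    rw [← exp_oscTau]; exact Real.exp_le_exp.mpr ht
  have A : ∀ t, 0 ≤ t → t ≤ oscTau → ψ (Real.log c + t) = oscU0 t := by
    intro t h0 h1
    have he : 1 ≤ Real.exp t := by simpa using h0
    have he2 := exp_le t h1
    have := f3 (c * Real.exp t) ⟨by nlinarith, by rw [hcc]; nlinarith⟩
    simp only [hF0] at this
    rw [Real.log_mul hc.ne' (Real.exp_pos t).ne', Real.log_exp] at this
    apply conv c t _ hc
    rw [← this]; ring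
  have B : ∀ t, 0 ≤ t → t ≤ oscTau → ψ (Real.log c + oscTau + t) = -oscU0 t := by
    intro t h0 h1
    have he : 1 ≤ Real.exp t := by simpa using h0
    have he2 := exp_le t h1
    have := g3 (cc * Real.exp t) ⟨by nlinarith, by nlinarith⟩
    simp only [hF0] at this
    rw [Real.log_mul hccp.ne' (Real.exp_pos t).ne', Real.log_exp, hlogcc] at this
    have h5 := conv cc t (-ψ (Real.log c + oscTau + t)) hccp (by rw [← this]; ring)
    linarith
  refine ⟨-Real.log c, fun s => ?_⟩
  have pφ : Function.Periodic (oscExt oscU0) (2 * oscTau) := oscExt_per oscU0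
  obtain ⟨n, hn, -⟩ := existsUnique_add_zsmul_mem_Ico hT (s + -Real.log c) 0
  set t := s + -Real.log c + n • (2 * oscTau) with ht
  have e1 : oscExt oscU0 (s + -Real.log c) = oscExt oscU0 t := by
    rw [ht]; exact ((pφ.zsmul n) _).symm
  have e2 : ψ s = ψ (Real.log c + t) := by
    rw [ht, show Real.log c + (s + -Real.log c + n • (2 * oscTau)) = s + n • (2 * oscTau) by ring]
    exact ((hper.zsmul n) _).symm
  rw [e1, e2]
  obtain ⟨t0, t1⟩ := hn
  rw [zero_add] at t1
  rcases le_total t oscTau with hle | hle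
  · rw [A t t0 hle, oscExt_Icc (n := 0) oscU0_tau (by simpa using t0) (by simpa using hle)]
    simp
  · rw [show Real.log c + t = Real.log c + oscTau + (t - oscTau) by ring,
      B (t - oscTau) (by linarith) (by linarith),
      oscExt_Icc (n := 1) oscU0_tau (by simpa using hle) (by push_cast; linarith)]
    simp

theorem periodic_solution_n_eq_one_exists_unique
    (T : ℝ) (hT : T = -2 * Real.log ((3 - Real.sqrt 5) / 2)) :
    ∃ φ : ℝ → ℝ, IsOscSolOne φ ∧ Function.Periodic φ T ∧
      (∃ s, 0 < φ s) ∧ (∃ s, φ s < 0) ∧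
      (∀ T' : ℝ, 0 < T' → Function.Periodic φ T' → T ≤ T') ∧
      (∀ ψ : ℝ → ℝ, IsOscSolOne ψ → Function.Periodic ψ T →
        (∃ s, 0 < ψ s) → (∃ s, ψ s < 0) →
        (∀ T' : ℝ, 0 < T' → Function.Periodic ψ T' → T ≤ T') →
        ∃ s₀ : ℝ, ∀ s, ψ s = φ (s + s₀)) := by
  have hT2 : T = 2 * oscTau := by
    rw [hT, ← exp_neg_oscTau, Real.log_exp]; ring
  subst hT2
  have ht := oscTau_pos
  have hp : 0 < oscU0 (oscTau / 2) := oscU0_pos (by linarith) (by linarith)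
  have v1 : oscExt oscU0 (oscTau / 2) = oscU0 (oscTau / 2) := by
    rw [oscExt_Icc (n := 0) oscU0_tau (by push_cast; linarith) (by push_cast; linarith)]
    simp
  have v2 : oscExt oscU0 (oscTau / 2 + oscTau) = -oscU0 (oscTau / 2) := by
    rw [oscExt_Icc (n := 1) oscU0_tau (by push_cast; linarith) (by push_cast; linarith)]
    simp
  refine ⟨oscExt oscU0, oscExt_sol, oscExt_per oscU0, ⟨_, by rw [v1]; exact hp⟩,
    ⟨_, by rw [v2]; linarith⟩, ?_, fun ψ h1 h2 h3 h4 _ => osc_unique h1 h2 h3 h4⟩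
  intro T' hT' hper
  by_contra hlt
  push Not at hlt
  have z0 : oscExt oscU0 T' = 0 := by
    have h1 := hper 0
    have h2 := oscExt_zero 0
    simp only [Int.cast_zero, zero_mul] at h2
    rwa [zero_add, h2] at h1
  have hTeq : T' = oscTau := by
    rcases lt_trichotomy T' oscTau with h | h | h
    · have h2 := oscU0_pos hT' h
      rw [oscExt_Icc (n := 0) oscU0_tau (by push_cast; linarith) (by push_cast; linarith)] at z0
      simp at z0
      linarith
    · exact h
    · have h2 := oscU0_pos (s := T' - oscTau) (by linarith) (by linarith)
      rw [oscExt_Icc (n := 1) oscU0_tau (by push_cast; linarith) (by push_cast; linarith)] at z0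
      simp at z0
      linarith
  have := hper (oscTau / 2)
  rw [hTeq, v2, v1] at this
  linarith
end
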